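/- arXiv:1905.09452 — 4 statements merged into one kernel-verified Lean document; each statement's English description precedes it below -/
import Mathlib

section
/- The dimensional number s_B, viewed as a function of B ∈ (1,∞), satisfies lim_{B→1⁺} s_B = 1 and lim_{B→∞} s_B = 1/2. -/
/-!
Write `Z_n(s) = Σ q_n(a)^{-2s}`, the sum over `n`-tuples of positive integers, so that the sum
defining `s_B` is `B^{-ns} Z_n(s)`.

* For `s ≤ 1/2` every `Z_n(s)` with `n ≥ 1` is infinite (`contSum_eq_top`), so `s_B ≥ 1/2`.
* Since `q_{n+m}(a, b) ≥ q_n(a) q_m(b)`, `Z` is submultiplicative (`contSum_add_le`). For `s > 1/2`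
  it is finite, Fekete's lemma gives the existence of the limit, and the limit is `≤ 0` as soon as
  the sums `B^{-ns} Z_n(s)` are bounded (`mem_presSet`). As `Z_n(s) ≤ Z_1(s)^n`, this holds
  for any fixed `s > 1/2` when `B` is large; hence `s_B → 1/2` as `B → ∞`.
* The lengths `1 / (q_n (q_n + q_{n-1}))` of the cylinders of order `n` add up to `1`
  (`tsum_cylLength`), and they are comparable to `q_n^{-2}`. Hence `Z_n(1) ≤ 2`, which gives
  `s_B ≤ 1` for `B > 1`. For `s < 1` the bound `q_n^2 ≥ 2^{n-1}` gives
  `Z_n(s) ≥ 2^{(n-1)(1-s)}` (`contSum_growth`), so the limit is at least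
  `(1-s) log 2 - s log B`, which is positive for `B` close to `1`; hence `s_B → 1` as `B → 1⁺`.
-/

open Filter Topology MeasureTheory
open scoped ENNReal NNReal

/-- The Gauss map `T(x) = 1/x - ⌊1/x⌋` (with `T 0 = 0`). -/
noncomputable def gaussMap (x : ℝ) : ℝ := if x = 0 then 0 else 1 / x - ⌊1 / x⌋

/-- The `n`-th partial quotient `a_n(x) = ⌊1 / T^[n-1] x⌋` of the continued fraction
expansion of `x` (for `n ≥ 1`). -/
noncomputable def cfA (n : ℕ) (x : ℝ) : ℕ := ⌊1 / gaussMap^[n - 1] x⌋₊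

/-- The continuant `q_n(a_1, …, a_n)`, defined by `q_{-1} = 0`, `q_0 = 1`,
`q_k = a_k q_{k-1} + q_{k-2}`. -/
def contQ (l : List ℕ) : ℕ := (l.foldl (fun p a => (p.2, a * p.2 + p.1)) (0, 1)).2

/-- The continuant numerator `p_n(a_1, …, a_n)`, defined by `p_{-1} = 1`, `p_0 = 0`,
`p_k = a_k p_{k-1} + p_{k-2}`. -/
def contP (l : List ℕ) : ℕ := (l.foldl (fun p a => (p.2, a * p.2 + p.1)) (1, 0)).2

/-- `q_n(x) = q_n(a_1(x), …, a_n(x))`. -/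
noncomputable def cfQ (x : ℝ) (n : ℕ) : ℕ := contQ (List.ofFn fun i : Fin n => cfA (i + 1) x)

/-- `p_n(x) = p_n(a_1(x), …, a_n(x))`. -/
noncomputable def cfP (x : ℝ) (n : ℕ) : ℕ := contP (List.ofFn fun i : Fin n => cfA (i + 1) x)

/-- The sum `Σ_{(a_1,…,a_n) ∈ ℕ^n} B^{-n c} · q_n(a_1,…,a_n)^{-2 s}` over all `n`-tuples
of positive integers, computed in `ℝ≥0∞`. -/
noncomputable def presSum (B c s : ℝ) (n : ℕ) : ℝ≥0∞ :=
  ∑' a : Fin n → ℕ+,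
    ENNReal.ofReal (B ^ (-(n : ℝ) * c) *
      (contQ (List.ofFn fun i => (a i : ℕ)) : ℝ) ^ (-2 * s))

/-- `inf { s ≥ 0 : lim_{n→∞} (1/n) · log( Σ_{(a_1,…,a_n)∈ℕ^n} B^{-n·c(s)} q_n^{-2s} ) ≤ 0 }`,
where the limit is required to exist (in `EReal`) and be `≤ 0`. -/
noncomputable def presInf (B : ℝ) (c : ℝ → ℝ) : ℝ :=
  sInf {s : ℝ | 0 ≤ s ∧ ∃ P : EReal, P ≤ 0 ∧
    Tendsto (fun n : ℕ => (((n : ℝ)⁻¹ : ℝ) : EReal) * ENNReal.log (presSum B (c s) s n))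
      atTop (nhds P)}

/-! ### Continuants -/

/-- The pair `(q_{n-1}, q_n)` of consecutive continuants of a list of length `n`. -/
def contPair (l : List ℕ) : ℕ × ℕ := l.foldl (fun p a => (p.2, a * p.2 + p.1)) (0, 1)

theorem contQ_eq (l : List ℕ) : contQ l = (contPair l).2 := rfl

theorem contPair_concat (l : List ℕ) (a : ℕ) :
    contPair (l ++ [a]) = ((contPair l).2, a * (contPair l).2 + (contPair l).1) := by
  simp [contPair]

/-- `q_{n+m}(a, b) ≥ q_n(a) q_m(b)`. -/
theorem contQ_append_ge (l l' : List ℕ) : contQ l * contQ l' ≤ contQ (l ++ l') := by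
  -- The bound is proved for both entries of the pair, so that the recursion can be applied.
  have key : (contPair l).2 * (contPair l').1 ≤ (contPair (l ++ l')).1 ∧
      (contPair l).2 * (contPair l').2 ≤ (contPair (l ++ l')).2 := by
    induction l' using List.reverseRecOn with
    | nil => simp [contPair]
    | append_singleton l' a ih =>
      rw [← List.append_assoc, contPair_concat, contPair_concat]
      refine ⟨ih.2, ?_⟩
      have h := Nat.mul_le_mul_left a ih.2
      nlinarith [ih.1]
  exact key.2

/-- The pair `(q_{n-1}, q_n)` of a tuple of positive integers. -/
def tuplePair {n : ℕ} (a : Fin n → ℕ+) : ℕ × ℕ := contPair (List.ofFn fun i => (a i : ℕ))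

theorem tuplePair_snoc {n : ℕ} (a : Fin n → ℕ+) (k : ℕ+) :
    tuplePair (Fin.snoc a k : Fin (n + 1) → ℕ+)
      = ((tuplePair a).2, k * (tuplePair a).2 + (tuplePair a).1) := by
  have : (List.ofFn fun i => ((Fin.snoc a k : Fin (n + 1) → ℕ+) i : ℕ))
      = (List.ofFn fun i => (a i : ℕ)) ++ [(k : ℕ)] := by
    rw [List.ofFn_succ']
    simp
  rw [tuplePair, this, contPair_concat]
  rfl

theorem tuplePair_append {m n : ℕ} (a : Fin m → ℕ+) (b : Fin n → ℕ+) :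
    (tuplePair a).2 * (tuplePair b).2 ≤ (tuplePair (Fin.append a b)).2 := by
  have : (List.ofFn fun i => ((Fin.append a b) i : ℕ))
      = (List.ofFn fun i => (a i : ℕ)) ++ (List.ofFn fun i => (b i : ℕ)) := by
    rw [← List.ofFn_fin_append]
    congr 1
    funext i
    refine Fin.addCases (fun i => ?_) (fun i => ?_) i <;> simp
  have h := contQ_append_ge (List.ofFn fun i => (a i : ℕ)) (List.ofFn fun i => (b i : ℕ))
  rw [← this] at h
  exact h

theorem tuplePair_bounds {n : ℕ} (a : Fin n → ℕ+) :
    (tuplePair a).1 ≤ (tuplePair a).2 ∧ 1 ≤ (tuplePair a).2 ∧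
      2 ^ n ≤ (tuplePair a).2 * ((tuplePair a).2 + (tuplePair a).1) := by
  induction n with
  | zero => simp [tuplePair, contPair]
  | succ n ih =>
    rw [← Fin.snoc_init_self a, tuplePair_snoc]
    obtain ⟨h1, h2, h3⟩ := ih (Fin.init a)
    generalize tuplePair (Fin.init a) = x at *
    have hk : 1 ≤ (a (Fin.last n) : ℕ) := (a (Fin.last n)).pos
    generalize (a (Fin.last n) : ℕ) = k at *
    have h4 : x.2 ≤ k * x.2 := by nlinarith
    refine ⟨by simp only; omega, by simp only; omega, ?_⟩
    simp only
    have h5 : (x.2 + x.1) * (x.2 + x.1 + x.2) ≤ (k * x.2 + x.1) * (k * x.2 + x.1 + x.2) :=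
      Nat.mul_le_mul (by omega) (by omega)
    rw [pow_succ]
    nlinarith

theorem tuplePair_one_le {n : ℕ} :
    (tuplePair (fun _ : Fin n => (1 : ℕ+))).2 ≤ 2 ^ n := by
  induction n with
  | zero => simp [tuplePair, contPair]
  | succ n ih =>
    rw [← Fin.snoc_init_self (fun _ : Fin (n + 1) => (1 : ℕ+)), tuplePair_snoc]
    have h := (tuplePair_bounds (fun _ : Fin n => (1 : ℕ+))).1
    change 1 * (tuplePair (fun _ : Fin n => (1 : ℕ+))).2
      + (tuplePair (fun _ : Fin n => (1 : ℕ+))).1 ≤ _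
    rw [pow_succ]
    omega

/-! ### The sums of powers of continuants -/

/-- The sum `Σ q_n(a)^{-2s}` over all `n`-tuples of positive integers. -/
noncomputable def contSum (s : ℝ) (n : ℕ) : ℝ≥0∞ :=
  ∑' a : Fin n → ℕ+, ENNReal.ofReal (((tuplePair a).2 : ℝ) ^ (-2 * s))

theorem presSum_eq {B : ℝ} (hB : 0 ≤ B) (c s : ℝ) (n : ℕ) :
    presSum B c s n = ENNReal.ofReal (B ^ (-(n : ℝ) * c)) * contSum s n := by
  rw [presSum, contSum, ← ENNReal.tsum_mul_left]
  refine tsum_congr fun a => ?_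
  rw [ENNReal.ofReal_mul (Real.rpow_nonneg hB _)]
  rfl

theorem tsum_snoc {n : ℕ} (f : (Fin (n + 1) → ℕ+) → ℝ≥0∞) :
    ∑' a, f a = ∑' (a : Fin n → ℕ+) (k : ℕ+), f (Fin.snoc a k : Fin (n + 1) → ℕ+) := by
  rw [← (Fin.snocEquiv (fun _ : Fin (n + 1) => ℕ+)).tsum_eq f, ENNReal.tsum_prod',
    ENNReal.tsum_comm]
  rfl

theorem tuple_q_pos {n : ℕ} (a : Fin n → ℕ+) : (1 : ℝ) ≤ ((tuplePair a).2 : ℝ) := by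
  exact_mod_cast (tuplePair_bounds a).2.1

theorem contSum_add_le {s : ℝ} (hs : 0 ≤ s) (m n : ℕ) :
    contSum s (m + n) ≤ contSum s m * contSum s n := by
  unfold contSum
  rw [← (Fin.appendEquiv m n).tsum_eq, ENNReal.tsum_prod', ← ENNReal.tsum_mul_right]
  refine ENNReal.tsum_le_tsum fun a => ?_
  rw [← ENNReal.tsum_mul_left]
  refine ENNReal.tsum_le_tsum fun b => ?_
  have ha := tuple_q_pos a
  have hb := tuple_q_pos b
  rw [← ENNReal.ofReal_mul (by positivity), ← Real.mul_rpow (by positivity) (by positivity)]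
  refine ENNReal.ofReal_le_ofReal (Real.rpow_le_rpow_of_nonpos (by positivity) ?_ (by linarith))
  exact_mod_cast tuplePair_append a b

theorem contSum_zero (s : ℝ) : contSum s 0 = 1 := by
  simp [contSum, tuplePair, contPair]

/-- The lower bound coming from the single tuple `(1, …, 1)`. -/
theorem contSum_ge {s : ℝ} (hs : 0 ≤ s) (n : ℕ) :
    ENNReal.ofReal (((2 : ℝ) ^ n) ^ (-2 * s)) ≤ contSum s n := by
  refine le_trans ?_ (ENNReal.le_tsum (fun _ : Fin n => (1 : ℕ+)))
  have h := tuple_q_pos (fun _ : Fin n => (1 : ℕ+))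
  refine ENNReal.ofReal_le_ofReal (Real.rpow_le_rpow_of_nonpos (by positivity) ?_ (by linarith))
  exact_mod_cast tuplePair_one_le

/-- The length `1 / (q_n (q_n + q_{n-1}))` of the interval of numbers in `[0, 1]` whose continued
fraction expansion starts with `a`. -/
noncomputable def cylLength {n : ℕ} (a : Fin n → ℕ+) : ℝ :=
  1 / (((tuplePair a).2 : ℝ) * ((tuplePair a).2 + (tuplePair a).1))

/-- A telescoping series: the cylinders of order `n + 1` partition each cylinder of order `n`. -/
theorem tsum_cylLength_snoc {n : ℕ} (a : Fin n → ℕ+) :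
    ∑' k : ℕ+, ENNReal.ofReal (cylLength (Fin.snoc a k : Fin (n + 1) → ℕ+))
      = ENNReal.ofReal (cylLength a) := by
  have hq := tuple_q_pos a
  set q : ℝ := ((tuplePair a).2 : ℝ) with hqdef
  set p : ℝ := ((tuplePair a).1 : ℝ) with hpdef
  have hp : 0 ≤ p := Nat.cast_nonneg _
  have hterm : ∀ k : ℕ, cylLength (Fin.snoc a k.succPNat : Fin (n + 1) → ℕ+)
      = 1 / (q * ((k + 1) * q + p)) - 1 / (q * (((k + 1 : ℕ) + 1) * q + p)) := by
    intro k
    rw [cylLength, tuplePair_snoc]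
    push_cast [Nat.succPNat_coe]
    simp only [← hqdef, ← hpdef]
    have h1 : 0 < (k + 1) * q + p := by positivity
    have h2 : 0 < (k + 1 + 1) * q + p := by positivity
    have h3 : 0 < (k + 1) * q + p + q := by positivity
    field_simp
    ring
  have hnn : ∀ k : ℕ, 0 ≤ cylLength (Fin.snoc a k.succPNat : Fin (n + 1) → ℕ+) := by
    intro k
    unfold cylLength
    positivity
  have hlim : Tendsto (fun k : ℕ => 1 / (q * (((k : ℝ) + 1) * q + p))) atTop (𝓝 0) := by
    simp only [one_div]
    refine Tendsto.inv_tendsto_atTop ?_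
    refine Tendsto.const_mul_atTop (by linarith) ?_
    refine tendsto_atTop_add_const_right _ _ ?_
    refine Tendsto.atTop_mul_const (by linarith) ?_
    exact tendsto_atTop_add_const_right _ _ tendsto_natCast_atTop_atTop
  have hsum : HasSum (fun k : ℕ => cylLength (Fin.snoc a k.succPNat : Fin (n + 1) → ℕ+))
      (cylLength a) := by
    rw [hasSum_iff_tendsto_nat_of_nonneg hnn]
    simp only [hterm]
    have : ∀ N : ℕ, ∑ k ∈ Finset.range N,
        (1 / (q * (((k : ℝ) + 1) * q + p)) - 1 / (q * (((k + 1 : ℕ) + 1) * q + p)))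
        = 1 / (q * (((0 : ℕ) + 1) * q + p)) - 1 / (q * ((N + 1) * q + p)) := fun N =>
      Finset.sum_range_sub' (fun k : ℕ => 1 / (q * (((k : ℝ) + 1) * q + p))) N
    simp only [this]
    have h := hlim.const_sub (1 / (q * (((0 : ℕ) + 1) * q + p)))
    have he : cylLength a = 1 / (q * (((0 : ℕ) + 1) * q + p)) - 0 := by
      simp [cylLength, hqdef, hpdef]
    rw [he]
    exact h
  rw [← Equiv.pnatEquivNat.symm.tsum_eq, ← hsum.tsum_eq,
    ENNReal.ofReal_tsum_of_nonneg hnn hsum.summable]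
  rfl

theorem tsum_cylLength (n : ℕ) :
    ∑' a : Fin n → ℕ+, ENNReal.ofReal (cylLength a) = 1 := by
  induction n with
  | zero => simp [cylLength, tuplePair, contPair]
  | succ n ih => rw [tsum_snoc]; simp only [tsum_cylLength_snoc, ih]

/-- Each `q_n(a)^{-2}` is at most twice the length of the cylinder of `a`. -/
theorem contSum_one_le (n : ℕ) : contSum 1 n ≤ 2 := by
  have : contSum 1 n ≤ ∑' a : Fin n → ℕ+, 2 * ENNReal.ofReal (cylLength a) := by
    refine ENNReal.tsum_le_tsum fun a => ?_
    rw [show (2 : ℝ≥0∞) = ENNReal.ofReal 2 by simp, ← ENNReal.ofReal_mul (by norm_num)]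
    refine ENNReal.ofReal_le_ofReal ?_
    have hq := tuple_q_pos a
    have hp : ((tuplePair a).1 : ℝ) ≤ (tuplePair a).2 := by exact_mod_cast (tuplePair_bounds a).1
    rw [show (-2 * 1 : ℝ) = -((2 : ℕ) : ℝ) by norm_num, Real.rpow_neg (by positivity),
      Real.rpow_natCast, cylLength, mul_one_div, inv_eq_one_div,
      div_le_div_iff₀ (by positivity) (by positivity)]
    nlinarith
  rwa [ENNReal.tsum_mul_left, tsum_cylLength, mul_one] at this

/-- For `s ≤ 1`, exponential growth of `q_n` turns `Σ |I_n(a)| = 1` into exponential growth of the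
sum of the `q_n^{-2s}`. -/
theorem contSum_growth {s : ℝ} (hs : s ≤ 1) (n : ℕ) :
    ENNReal.ofReal (((2 : ℝ) ^ n / 2) ^ (1 - s)) ≤ contSum s n := by
  calc ENNReal.ofReal (((2 : ℝ) ^ n / 2) ^ (1 - s))
      = ∑' a : Fin n → ℕ+,
          ENNReal.ofReal (((2 : ℝ) ^ n / 2) ^ (1 - s)) * ENNReal.ofReal (cylLength a) := by
        rw [ENNReal.tsum_mul_left, tsum_cylLength, mul_one]
    _ ≤ contSum s n := by
        refine ENNReal.tsum_le_tsum fun a => ?_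
        rw [← ENNReal.ofReal_mul (by positivity)]
        refine ENNReal.ofReal_le_ofReal ?_
        have hq := tuple_q_pos a
        obtain ⟨h1, -, h3⟩ := tuplePair_bounds a
        have h1' : ((tuplePair a).1 : ℝ) ≤ (tuplePair a).2 := by exact_mod_cast h1
        have h3' : (2 : ℝ) ^ n ≤ ((tuplePair a).2 : ℝ) * ((tuplePair a).2 + (tuplePair a).1) := by
          exact_mod_cast h3
        have hp : (0 : ℝ) ≤ ((tuplePair a).1 : ℝ) := Nat.cast_nonneg _
        rw [cylLength]
        generalize ((tuplePair a).2 : ℝ) = q at *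
        generalize ((tuplePair a).1 : ℝ) = p at *
        have e : q ^ (-2 * s) = (q ^ 2) ^ (1 - s) * (1 / q ^ 2) := by
          rw [← Real.rpow_natCast, ← Real.rpow_mul (by positivity), one_div,
            ← Real.rpow_neg (by positivity), ← Real.rpow_add (by positivity)]
          congr 1
          push_cast
          ring
        rw [e]
        have h4 : (2 : ℝ) ^ n / 2 ≤ q ^ 2 := by nlinarith
        have h5 : q ^ 2 ≤ q * (q + p) := by nlinarith
        have h6 : 0 ≤ 1 - s := by linarith
        gcongr

/-- For `s ≤ 1/2` the sums diverge: keep `a_1 = ⋯ = a_n = 1` fixed and let `a_{n+1}` vary. -/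
theorem contSum_eq_top {s : ℝ} (hs : s ≤ 1 / 2) (n : ℕ) : contSum s (n + 1) = ⊤ := by
  by_contra hne
  have hle : ∑' k : ℕ+, ENNReal.ofReal (((2 : ℝ) ^ (n + 1))⁻¹ * ((k : ℕ) : ℝ)⁻¹)
      ≤ contSum s (n + 1) := by
    rw [contSum, tsum_snoc]
    refine le_trans ?_ (ENNReal.le_tsum (fun _ : Fin n => (1 : ℕ+)))
    refine ENNReal.tsum_le_tsum fun k => ?_
    refine ENNReal.ofReal_le_ofReal ?_
    have hq := tuple_q_pos (Fin.snoc (fun _ : Fin n => (1 : ℕ+)) k : Fin (n + 1) → ℕ+)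
    have hk : 1 ≤ (k : ℕ) := k.pos
    have hub : (tuplePair (Fin.snoc (fun _ : Fin n => (1 : ℕ+)) k : Fin (n + 1) → ℕ+)).2
        ≤ 2 ^ (n + 1) * (k : ℕ) := by
      rw [tuplePair_snoc]
      have h1 := (tuplePair_bounds (fun _ : Fin n => (1 : ℕ+))).1
      have h2 := tuplePair_one_le (n := n)
      simp only
      rw [pow_succ]
      nlinarith
    have hub' : ((tuplePair (Fin.snoc (fun _ : Fin n => (1 : ℕ+)) k : Fin (n + 1) → ℕ+)).2 : ℝ)
        ≤ 2 ^ (n + 1) * (k : ℕ) := by exact_mod_cast hub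
    rw [← mul_inv]
    calc ((2 : ℝ) ^ (n + 1) * (k : ℕ))⁻¹
        ≤ ((tuplePair (Fin.snoc (fun _ : Fin n => (1 : ℕ+)) k : Fin (n + 1) → ℕ+)).2 : ℝ)⁻¹ := by
          gcongr
      _ = ((tuplePair (Fin.snoc (fun _ : Fin n => (1 : ℕ+)) k : Fin (n + 1) → ℕ+)).2 : ℝ)
            ^ (-1 : ℝ) := (Real.rpow_neg_one _).symm
      _ ≤ _ := Real.rpow_le_rpow_of_exponent_le hq (by linarith)
  have hsum := ENNReal.summable_toReal (ne_top_of_le_ne_top hne hle)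
  have hsum2 : Summable fun k : ℕ+ => ((2 : ℝ) ^ (n + 1))⁻¹ * ((k : ℕ) : ℝ)⁻¹ := by
    refine hsum.congr fun k => ?_
    rw [ENNReal.toReal_ofReal (by positivity)]
  have hsum3 : Summable fun k : ℕ+ => ((k : ℕ) : ℝ)⁻¹ :=
    (summable_mul_left_iff (by positivity)).1 hsum2
  exact Real.not_summable_natCast_inv
    ((summable_pnat_iff_summable_nat (f := fun k : ℕ => (k : ℝ)⁻¹)).1 hsum3)

theorem contSum_one_ne_top {s : ℝ} (hs : 1 / 2 < s) : contSum s 1 ≠ ⊤ := by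
  have h : contSum s 1 = ∑' k : ℕ+, ENNReal.ofReal (((k : ℕ) : ℝ) ^ (-2 * s)) := by
    rw [contSum, ← (Equiv.funUnique (Fin 1) ℕ+).symm.tsum_eq]
    refine tsum_congr fun k => ?_
    simp [tuplePair, contPair]
  have hsum : Summable fun k : ℕ+ => ((k : ℕ) : ℝ) ^ (-2 * s) :=
    (Real.summable_nat_rpow.2 (by linarith : -2 * s < -1)).comp_injective PNat.coe_injective
  rw [h]
  exact hsum.tsum_ofReal_ne_top

theorem contSum_le_pow {s : ℝ} (hs : 0 ≤ s) (n : ℕ) : contSum s n ≤ contSum s 1 ^ n := by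
  induction n with
  | zero => simp [contSum_zero]
  | succ n ih =>
    rw [pow_succ]
    exact (contSum_add_le hs n 1).trans (by gcongr)

/-! ### The set defining `s_B` -/

/-- The set of exponents whose infimum is `s_B`. -/
def presSet (B : ℝ) : Set ℝ :=
  {s : ℝ | 0 ≤ s ∧ ∃ P : EReal, P ≤ 0 ∧
    Tendsto (fun n : ℕ => (((n : ℝ)⁻¹ : ℝ) : EReal) * ENNReal.log (presSum B s s n))
      atTop (nhds P)}

theorem presSum_add_le {B s : ℝ} (hB : 0 < B) (hs : 0 ≤ s) (m n : ℕ) :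
    presSum B s s (m + n) ≤ presSum B s s m * presSum B s s n := by
  rw [presSum_eq hB.le, presSum_eq hB.le, presSum_eq hB.le, mul_mul_mul_comm,
    ← ENNReal.ofReal_mul (by positivity), ← Real.rpow_add hB]
  have h : -((m + n : ℕ) : ℝ) * s = -(m : ℝ) * s + -(n : ℝ) * s := by push_cast; ring
  rw [h]
  gcongr
  exact contSum_add_le hs m n

/-- If `s > 1/2` and the sums are bounded, then `s` belongs to the set: the limit exists by
Fekete's lemma. -/
theorem mem_presSet {B s C : ℝ} (hB : 0 < B) (hs : 1 / 2 < s)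
    (hC : ∀ n, presSum B s s n ≤ ENNReal.ofReal C) : s ∈ presSet B := by
  have hs0 : 0 ≤ s := by linarith
  have htop : ∀ n, presSum B s s n ≠ ⊤ := fun n => ne_top_of_le_ne_top ENNReal.ofReal_ne_top (hC n)
  have hge : ∀ n : ℕ, ENNReal.ofReal (B ^ (-(n : ℝ) * s) * ((2 : ℝ) ^ n) ^ (-2 * s))
      ≤ presSum B s s n := by
    intro n
    rw [presSum_eq hB.le, ENNReal.ofReal_mul (by positivity)]
    gcongr
    exact contSum_ge hs0 n
  have hgepos : ∀ n : ℕ, 0 < B ^ (-(n : ℝ) * s) * ((2 : ℝ) ^ n) ^ (-2 * s) := fun n => by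
    positivity
  have hger : ∀ n : ℕ, B ^ (-(n : ℝ) * s) * ((2 : ℝ) ^ n) ^ (-2 * s) ≤ (presSum B s s n).toReal :=
    fun n => (ENNReal.ofReal_le_iff_le_toReal (htop n)).1 (hge n)
  have hpos : ∀ n, 0 < (presSum B s s n).toReal := fun n => (hgepos n).trans_le (hger n)
  have hCpos : 0 < C := by
    by_contra h
    have h0 := hC 0
    rw [ENNReal.ofReal_of_nonpos (not_lt.1 h)] at h0
    have h1 := hpos 0
    simp [le_antisymm h0 zero_le] at h1
  let u : ℕ → ℝ := fun n => Real.log (presSum B s s n).toReal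
  have hsub : Subadditive u := by
    intro m n
    change Real.log _ ≤ Real.log _ + Real.log _
    rw [← Real.log_mul (hpos m).ne' (hpos n).ne', ← ENNReal.toReal_mul]
    exact Real.log_le_log (hpos _) (ENNReal.toReal_mono
      (ENNReal.mul_ne_top (htop m) (htop n)) (presSum_add_le hB hs0 m n))
  have hlow : ∀ n : ℕ, (n : ℝ) * (-s * Real.log B - 2 * s * Real.log 2) ≤ u n := by
    intro n
    have h := Real.log_le_log (hgepos n) (hger n)
    rw [Real.log_mul (by positivity) (by positivity), Real.log_rpow hB,
      Real.log_rpow (by positivity), Real.log_pow] at h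
    refine le_trans (le_of_eq ?_) h
    ring
  have hbdd : BddBelow (Set.range fun n : ℕ => u n / n) := by
    refine ⟨min 0 (-s * Real.log B - 2 * s * Real.log 2), ?_⟩
    rintro _ ⟨n, rfl⟩
    rcases Nat.eq_zero_or_pos n with rfl | hn
    · simp
    · refine (min_le_right _ _).trans ?_
      have hn' : (0 : ℝ) < n := by exact_mod_cast hn
      change _ ≤ u n / n
      rw [le_div_iff₀ hn', mul_comm]
      exact hlow n
  have hlim := hsub.tendsto_lim hbdd
  have hle0 : hsub.lim ≤ 0 := by
    have h2 : Tendsto (fun n : ℕ => Real.log C / (n : ℝ)) atTop (𝓝 0) :=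
      tendsto_const_div_atTop_nhds_zero_nat _
    refine le_of_tendsto_of_tendsto' hlim h2 fun n => ?_
    have h3 : (presSum B s s n).toReal ≤ C := ENNReal.toReal_le_of_le_ofReal hCpos.le (hC n)
    have h4 : u n ≤ Real.log C := Real.log_le_log (hpos n) h3
    gcongr
  refine ⟨hs0, (hsub.lim : EReal), by exact_mod_cast hle0, ?_⟩
  have hE := (continuous_coe_real_ereal.tendsto hsub.lim).comp hlim
  refine hE.congr fun n => ?_
  rw [ENNReal.log_pos_real' (hpos n), ← EReal.coe_mul]
  simp only [Function.comp_apply, u]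
  rw [div_eq_inv_mul]

theorem one_mem_presSet {B : ℝ} (hB : 1 ≤ B) : 1 ∈ presSet B := by
  have hB0 : 0 < B := by linarith
  refine mem_presSet (C := 2) hB0 (by norm_num) fun n => ?_
  rw [presSum_eq hB0.le]
  have h1 : ENNReal.ofReal (B ^ (-(n : ℝ) * 1)) ≤ 1 := by
    rw [ENNReal.ofReal_le_one]
    exact Real.rpow_le_one_of_one_le_of_nonpos hB (by simp)
  calc _ ≤ (1 : ℝ≥0∞) * 2 := mul_le_mul' h1 (contSum_one_le n)
    _ = ENNReal.ofReal 2 := by simp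

/-- Every `s > 1/2` belongs to the set once `B^s` is at least `Σ k^{-2s}`. -/
theorem eventually_mem_presSet {s : ℝ} (hs : 1 / 2 < s) : ∀ᶠ B in atTop, s ∈ presSet B := by
  have hs0 : 0 < s := by linarith
  have ht : Tendsto (fun B : ℝ => B ^ (-s) * (contSum s 1).toReal) atTop (𝓝 0) := by
    simpa using (tendsto_rpow_neg_atTop hs0).mul_const (contSum s 1).toReal
  filter_upwards [ht.eventually_le_const one_pos, eventually_gt_atTop 0] with B hB hB0
  refine mem_presSet (C := 1) hB0 hs fun n => ?_
  rw [presSum_eq hB0.le]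
  calc _ ≤ ENNReal.ofReal (B ^ (-(n : ℝ) * s)) * contSum s 1 ^ n := by
        gcongr
        exact contSum_le_pow hs0.le n
    _ = ENNReal.ofReal ((B ^ (-s) * (contSum s 1).toReal) ^ n) := by
        rw [mul_pow, ENNReal.ofReal_mul (by positivity), ← ENNReal.toReal_pow,
          ENNReal.ofReal_toReal (ENNReal.pow_ne_top (contSum_one_ne_top hs)),
          ← Real.rpow_natCast, ← Real.rpow_mul hB0.le]
        congr 3
        ring
    _ ≤ ENNReal.ofReal 1 := ENNReal.ofReal_le_ofReal (pow_le_one₀ (by positivity) hB)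

theorem half_lt_of_mem {B s : ℝ} (hB : 0 < B) (hs : s ∈ presSet B) : 1 / 2 < s := by
  by_contra! h
  obtain ⟨-, P, hP, hlim⟩ := hs
  have htop : Tendsto (fun n : ℕ => (((n : ℝ)⁻¹ : ℝ) : EReal) * ENNReal.log (presSum B s s n))
      atTop (𝓝 ⊤) := by
    refine tendsto_const_nhds.congr' ?_
    filter_upwards [eventually_gt_atTop 0] with n hn
    obtain ⟨m, rfl⟩ := Nat.exists_eq_succ_of_ne_zero hn.ne'
    rw [presSum_eq hB.le, contSum_eq_top h,
      ENNReal.mul_top (by simpa using Real.rpow_pos_of_pos hB _), ENNReal.log_top,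
      EReal.coe_mul_top_of_pos (by positivity)]
  rw [tendsto_nhds_unique hlim htop] at hP
  simp at hP

/-- No `s ≤ r < 1` belongs to the set when `1 ≤ B < 2^{1-r}`: the pressure is then at least
`(1 - r) log 2 - log B > 0`. -/
theorem lt_of_mem {B s r : ℝ} (hB : 1 ≤ B) (hr : r < 1) (hBr : Real.log B < (1 - r) * Real.log 2)
    (hs : s ∈ presSet B) : r < s := by
  by_contra! h
  obtain ⟨hs0, P, hP, hlim⟩ := hs
  have hB0 : 0 < B := by linarith
  have hlogB : 0 ≤ Real.log B := Real.log_nonneg hB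
  have hlog2 : 0 < Real.log 2 := Real.log_pos (by norm_num)
  set δ := (1 - s) * Real.log 2 - s * Real.log B with hδ
  have hδpos : 0 < δ := by nlinarith
  have hlow : ∀ᶠ n : ℕ in atTop, ((δ - (1 - s) * Real.log 2 / n : ℝ) : EReal)
      ≤ (((n : ℝ)⁻¹ : ℝ) : EReal) * ENNReal.log (presSum B s s n) := by
    filter_upwards [eventually_gt_atTop 0] with n hn
    have hn' : (0 : ℝ) < n := by exact_mod_cast hn
    have h1 : ENNReal.ofReal (B ^ (-(n : ℝ) * s) * ((2 : ℝ) ^ n / 2) ^ (1 - s))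
        ≤ presSum B s s n := by
      rw [presSum_eq hB0.le, ENNReal.ofReal_mul (by positivity)]
      gcongr
      exact contSum_growth (by linarith) n
    have h2 := ENNReal.log_le_log h1
    rw [ENNReal.log_ofReal_of_pos (by positivity), Real.log_mul (by positivity) (by positivity),
      Real.log_rpow hB0, Real.log_rpow (by positivity), Real.log_div (by positivity) (by norm_num),
      Real.log_pow] at h2
    refine le_trans (le_of_eq ?_) (mul_le_mul_of_nonneg_left h2 (by positivity))
    rw [← EReal.coe_mul]
    congr 1
    rw [hδ]
    field_simp
    ring
  have hlimδ : Tendsto (fun n : ℕ => ((δ - (1 - s) * Real.log 2 / n : ℝ) : EReal)) atTop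
      (𝓝 (δ : EReal)) := by
    refine (continuous_coe_real_ereal.tendsto δ).comp ?_
    simpa using (tendsto_const_div_atTop_nhds_zero_nat ((1 - s) * Real.log 2)).const_sub δ
  have h3 : (δ : EReal) ≤ 0 := (le_of_tendsto_of_tendsto hlimδ hlim hlow).trans hP
  exact absurd (by exact_mod_cast h3) hδpos.not_ge

theorem bddBelow_presSet (B : ℝ) : BddBelow (presSet B) := ⟨0, fun _ h => h.1⟩

theorem sB_continuity :
    Tendsto (fun B : ℝ => presInf B (fun s => s)) (nhdsWithin 1 (Set.Ioi 1)) (nhds 1) ∧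
    Tendsto (fun B : ℝ => presInf B (fun s => s)) atTop (nhds (1 / 2)) := by
  change Tendsto (fun B : ℝ => sInf (presSet B)) (nhdsWithin 1 (Set.Ioi 1)) (nhds 1) ∧
    Tendsto (fun B : ℝ => sInf (presSet B)) atTop (nhds (1 / 2))
  constructor
  · refine tendsto_order.2 ⟨fun r hr => ?_, fun r hr => ?_⟩
    · obtain ⟨t, hrt, ht⟩ := exists_between hr
      have hlog : Tendsto Real.log (nhdsWithin 1 (Set.Ioi 1)) (𝓝 0) := by
        have h := (Real.continuousAt_log (one_ne_zero)).tendsto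
        rw [Real.log_one] at h
        exact h.mono_left nhdsWithin_le_nhds
      have hpos : 0 < (1 - t) * Real.log 2 :=
        mul_pos (by linarith) (Real.log_pos (by norm_num))
      filter_upwards [hlog.eventually_lt_const hpos, self_mem_nhdsWithin] with B hB hB1
      have hB1' : 1 ≤ B := le_of_lt hB1
      exact hrt.trans_le (le_csInf ⟨1, one_mem_presSet hB1'⟩
        fun s hs => (lt_of_mem hB1' ht hB hs).le)
    · filter_upwards [self_mem_nhdsWithin] with B hB1
      exact (csInf_le (bddBelow_presSet B) (one_mem_presSet (le_of_lt hB1))).trans_lt hr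
  · refine tendsto_order.2 ⟨fun r hr => ?_, fun r hr => ?_⟩
    · filter_upwards [eventually_ge_atTop 1] with B hB
      exact hr.trans_le (le_csInf ⟨1, one_mem_presSet hB⟩
        fun s hs => (half_lt_of_mem (by linarith) hs).le)
    · obtain ⟨t, ht, htr⟩ := exists_between hr
      filter_upwards [eventually_mem_presSet ht] with B hB
      exact (csInf_le (bddBelow_presSet B) hB).trans_lt htr
end

section
/- (Kleinbock–Wadleigh) Let Φ : ℕ → (1,∞) be any function with Φ(n) → ∞ as n → ∞. The Lebesgue measure of E_2(Φ) = { x ∈ [0,1) : a_n(x)·a_{n+1}(x) ≥ Φ(n) for infinitely many n ∈ ℕ } is zero if the series Σ_{n=1}^∞ (log Φ(n))/Φ(n) converges, and is full (measure 1) if the series diverges. -/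
/-!
The idea is to follow the law of `T^n x` conditioned on the first `n` partial quotients. If `x` is
Lebesgue-distributed on `(0,1)`, this conditional law has density `(1 + r) / (1 + r t)^2` with
`r = q_{n-1}/q_n ∈ [0,1]` (`condLaw r`). The family is closed under one step of the Gauss map:
given `a_1 = k`, a `condLaw r` point is sent to a `condLaw (1/(k + r))` point (`condLaw_branch`,
`condLaw_markov`). Hence any bound that is uniform in `r ∈ [0,1]` survives iteration, and no
continuants or cylinder sets are needed.

Under `condLaw r` one has `P(a_1 ≥ m) = (1 + r)/(m + r)`, which lies between `1/m` and `2/m`.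
Summing over the value of `a_1` gives, uniformly in `r`, that `P(a_1 a_2 ≥ φ)` is comparable to
`φ⁻¹ ∑_{k ≤ φ} 1/k`, hence to `log φ / φ` (`condLaw_prod_ge`, `condLaw_prod_le`).

In the convergence case the upper bound and the first Borel-Cantelli lemma conclude. In the
divergence case the series diverges along some parity class of indices. The products
`a_n a_{n+1}` with `n` in that class use disjoint pairs of partial quotients, so by the Markov
property the probability of avoiding `m` consecutive such events is at most
`∏ (1 - c_i) ≤ exp (-∑ c_i)` with `c_i = log Φ / (12 Φ)` (`condLaw_avoidSet_le`), which tends to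
`0`; thus almost no `x` has only finitely many large products.
-/

open Filter Topology MeasureTheory
open scoped ENNReal NNReal

/-- The set `E_2(Φ)` of irrational `x ∈ [0,1)` with `a_n(x) a_{n+1}(x) ≥ Φ(n)` for
infinitely many `n`. -/
def E2 (Φ : ℕ → ℝ) : Set ℝ :=
  {x | x ∈ Set.Ico (0 : ℝ) 1 ∧ Irrational x ∧
    ∃ᶠ n in atTop, Φ n ≤ (cfA n x : ℝ) * (cfA (n + 1) x : ℝ)}

/-- The irrational numbers of `(0,1)`, on which the Gauss map acts without exceptional points. -/
def irrI : Set ℝ := {x | 0 < x ∧ x < 1 ∧ Irrational x}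

/-- The law of `T^n x` conditioned on `a_1(x), …, a_n(x)`, for Lebesgue-random `x`:
the probability measure on `(0,1)` with density `(1 + r) / (1 + r t)^2`, where
`r = q_{n-1}/q_n`. -/
noncomputable def condLaw (r : ℝ) : Measure ℝ :=
  (volume.restrict irrI).withDensity fun t => ENNReal.ofReal ((1 + r) / (1 + r * t) ^ 2)

/-- The probability of `a_1 = k + 1` under `condLaw r`. -/
noncomputable def condW (r : ℝ) (k : ℕ) : ℝ := (1 + r) / ((k + 1 + r) * (k + 2 + r))

/-- The parameter of the law of `T x` given `a_1(x) = k + 1` when `x` has law `condLaw r`. -/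
noncomputable def condS (r : ℝ) (k : ℕ) : ℝ := 1 / (k + 1 + r)

lemma condS_nonneg {r : ℝ} (hr : 0 ≤ r) (k : ℕ) : 0 ≤ condS r k := by
  unfold condS; positivity

lemma condS_le_one {r : ℝ} (hr : 0 ≤ r) (k : ℕ) : condS r k ≤ 1 := by
  unfold condS
  rw [div_le_one (by positivity)]
  have : (0 : ℝ) ≤ k := k.cast_nonneg
  linarith

lemma condW_nonneg {r : ℝ} (hr : 0 ≤ r) (k : ℕ) : 0 ≤ condW r k := by
  unfold condW; positivity

/-! ### The Gauss map on the irrationals -/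

lemma measurableSet_irrI : MeasurableSet irrI := by
  have h : irrI = Set.Ioo 0 1 \ Set.range ((↑) : ℚ → ℝ) := by
    ext x; simp [irrI, Irrational, and_assoc]
  rw [h]
  exact measurableSet_Ioo.diff (Set.countable_range _).measurableSet

lemma ae_irrI_eq : irrI =ᵐ[volume] Set.Ioc (0 : ℝ) 1 := by
  have hc : (Set.range ((↑) : ℚ → ℝ)).Countable := Set.countable_range _
  have h0 := hc.ae_notMem (μ := (volume : Measure ℝ))
  filter_upwards [h0] with x hx
  apply propext
  change (0 < x ∧ x < 1 ∧ Irrational x) ↔ (0 < x ∧ x ≤ 1)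
  constructor
  · rintro ⟨h1, h2, -⟩; exact ⟨h1, h2.le⟩
  · rintro ⟨h1, h2⟩
    refine ⟨h1, lt_of_le_of_ne h2 ?_, hx⟩
    rintro rfl
    exact hx ⟨1, by simp⟩

lemma measurable_gaussMap : Measurable gaussMap := by
  unfold gaussMap
  refine Measurable.ite (measurableSet_singleton 0) measurable_const ?_
  have h : Measurable fun x : ℝ => 1 / x := by fun_prop
  exact h.sub (measurable_from_top.comp (Int.measurable_floor.comp h))

lemma measurable_cfA (n : ℕ) : Measurable (cfA n) := by
  unfold cfA
  have h : Measurable fun x : ℝ => 1 / gaussMap^[n - 1] x :=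
    (measurable_gaussMap.iterate _).const_div 1
  exact Nat.measurable_floor.comp h

lemma cfA_one (x : ℝ) : cfA 1 x = ⌊1 / x⌋₊ := by simp [cfA]

lemma cfA_succ (n : ℕ) (x : ℝ) : cfA (n + 1) x = cfA 1 (gaussMap^[n] x) := by
  simp [cfA]

/-- The branch of the Gauss map over `a_1 = k + 1` is inverse to `t ↦ 1 / (k + 1 + t)`. -/
lemma branch_eq (k : ℕ) (B : Set ℝ) :
    {x | cfA 1 x = k + 1 ∧ gaussMap x ∈ B} ∩ irrI
      = (fun t : ℝ => 1 / ((k : ℝ) + 1 + t)) '' (B ∩ irrI) := by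
  ext x
  constructor
  · rintro ⟨⟨ha, hB⟩, h0, h1, hirr⟩
    rw [cfA_one] at ha
    have hpos : 0 < 1 / x := by positivity
    have hfl : ⌊1 / x⌋ = (k : ℤ) + 1 := by
      rw [← Int.natCast_floor_eq_floor hpos.le, ha]; push_cast; ring
    have hT : gaussMap x = 1 / x - ((k : ℝ) + 1) := by
      simp only [gaussMap, if_neg h0.ne', hfl]; push_cast; ring
    have hirr2 : Irrational (gaussMap x) := by
      rw [hT, one_div]
      have := (hirr.inv).sub_natCast (k + 1)
      push_cast at this; exact this
    have hle := Int.floor_le (1 / x)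
    have hlt := Int.lt_floor_add_one (1 / x)
    rw [hfl] at hle hlt
    push_cast at hle hlt
    refine ⟨gaussMap x, ⟨hB, ?_, ?_, hirr2⟩, ?_⟩
    · refine lt_of_le_of_ne (by rw [hT]; linarith) ?_
      exact fun h => hirr2.ne_zero h.symm
    · rw [hT]; linarith
    · simp only [hT]; simp
  · rintro ⟨t, ⟨hB, h0, h1, hirr⟩, rfl⟩
    have hk : (0 : ℝ) ≤ k := k.cast_nonneg
    have hp : 0 < (k : ℝ) + 1 + t := by positivity
    have hinv : 1 / (1 / ((k : ℝ) + 1 + t)) = (k : ℝ) + 1 + t := by simp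
    have hfl : ⌊(k : ℝ) + 1 + t⌋ = (k : ℤ) + 1 := by
      rw [Int.floor_eq_iff]; push_cast; constructor <;> linarith
    have hT : gaussMap (1 / ((k : ℝ) + 1 + t)) = t := by
      have : (1 / ((k : ℝ) + 1 + t)) ≠ 0 := by positivity
      simp only [gaussMap, if_neg this, hinv, hfl]; push_cast; ring
    refine ⟨⟨?_, ?_⟩, by positivity, ?_, ?_⟩
    · change cfA 1 (1 / ((k : ℝ) + 1 + t)) = k + 1
      rw [cfA_one, hinv, Nat.floor_eq_iff hp.le]; push_cast; constructor <;> linarith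
    · change gaussMap (1 / ((k : ℝ) + 1 + t)) ∈ B
      rwa [hT]
    · change 1 / ((k : ℝ) + 1 + t) < 1
      rw [div_lt_one hp]; linarith
    · change Irrational (1 / ((k : ℝ) + 1 + t))
      have := (hirr.natCast_add (k + 1)).inv
      push_cast at this
      simpa using this

lemma cfA_pos {x : ℝ} (hx : x ∈ irrI) : 1 ≤ cfA 1 x := by
  rw [cfA_one, Nat.one_le_floor_iff, le_div_iff₀ hx.1]
  linarith [hx.2.1]

/-! ### Conditional laws and their Markov property -/

lemma condLaw_apply (r : ℝ) {S : Set ℝ} (hS : MeasurableSet S) :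
    condLaw r S = ∫⁻ t in S ∩ irrI, ENNReal.ofReal ((1 + r) / (1 + r * t) ^ 2) := by
  rw [condLaw, withDensity_apply _ hS, Measure.restrict_restrict hS]

lemma condLaw_zero : condLaw 0 = volume.restrict irrI := by
  simp [condLaw]

lemma condLaw_compl (r : ℝ) : condLaw r irrIᶜ = 0 := by
  rw [condLaw_apply r measurableSet_irrI.compl]; simp

lemma ae_irrI (r : ℝ) : ∀ᵐ x ∂condLaw r, x ∈ irrI := condLaw_compl r

lemma condLaw_Ioc {r s : ℝ} (hr : 0 ≤ r) (hs : 0 ≤ s) (hs1 : s ≤ 1) :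
    condLaw r (Set.Ioc 0 s) = ENNReal.ofReal (s * (1 + r) / (1 + r * s)) := by
  rw [condLaw_apply r measurableSet_Ioc]
  have h1 : (Set.Ioc 0 s ∩ irrI : Set ℝ) =ᵐ[volume] Set.Ioc 0 s := by
    have := (Filter.EventuallyEq.refl (ae (volume : Measure ℝ)) (Set.Ioc 0 s)).inter ae_irrI_eq
    refine this.trans (Eq.eventuallyEq ?_)
    exact Set.inter_eq_left.2 (Set.Ioc_subset_Ioc_right hs1)
  rw [setLIntegral_congr h1]
  have hcont : ContinuousOn (fun t : ℝ => (1 + r) / (1 + r * t) ^ 2) (Set.uIcc 0 s) := by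
    rw [Set.uIcc_of_le hs]
    refine ContinuousOn.div (by fun_prop) (by fun_prop) ?_
    intro t ht
    have : 0 ≤ r * t := mul_nonneg hr ht.1
    positivity
  have hint := hcont.intervalIntegrable (μ := volume)
  rw [← ofReal_integral_eq_lintegral_ofReal hint.1]
  · rw [← intervalIntegral.integral_of_le hs]
    rw [intervalIntegral.integral_eq_sub_of_hasDerivAt
      (f := fun t => t * (1 + r) / (1 + r * t)) ?_ hint]
    · simp
    · intro t ht
      rw [Set.uIcc_of_le hs] at ht
      have h0 : 0 ≤ r * t := mul_nonneg hr ht.1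
      have h : (1 + r * t) ≠ 0 := by positivity
      have := ((hasDerivAt_id t).mul_const (1 + r)).div
        (((hasDerivAt_id t).const_mul r).const_add 1) h
      refine this.congr_deriv ?_
      simp only [id]
      ring
  · filter_upwards [ae_restrict_mem measurableSet_Ioc] with t ht
    positivity

/-- The distribution of `a_1` under `condLaw r`. -/
lemma condLaw_tail {r : ℝ} (hr : 0 ≤ r) {m : ℕ} (hm : 1 ≤ m) :
    condLaw r {x | m ≤ cfA 1 x} = ENNReal.ofReal ((1 + r) / (m + r)) := by
  have hm' : (1 : ℝ) ≤ m := by exact_mod_cast hm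
  have h : {x | m ≤ cfA 1 x} =ᵐ[condLaw r] Set.Ioc 0 (1 / (m : ℝ)) := by
    filter_upwards [ae_irrI r] with x hx
    apply propext
    change m ≤ cfA 1 x ↔ 0 < x ∧ x ≤ 1 / (m : ℝ)
    rw [cfA_one, Nat.le_floor_iff (by have := hx.1; positivity)]
    rw [le_div_iff₀ hx.1, le_div_iff₀ (by positivity), mul_comm]
    exact ⟨fun h => ⟨hx.1, h⟩, fun h => h.2⟩
  rw [measure_congr h, condLaw_Ioc hr (by positivity) (by rw [div_le_one (by positivity)]; exact hm')]
  congr 1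
  field_simp

lemma condLaw_univ {r : ℝ} (hr : 0 ≤ r) : condLaw r Set.univ = 1 := by
  have h : (Set.univ : Set ℝ) =ᵐ[condLaw r] {x | 1 ≤ cfA 1 x} := by
    filter_upwards [ae_irrI r] with x hx
    exact propext ⟨fun _ => cfA_pos hx, fun _ => trivial⟩
  rw [measure_congr h, condLaw_tail hr le_rfl]
  have : (1 + r) / (((1 : ℕ) : ℝ) + r) = 1 := by
    push_cast; exact div_self (by positivity)
  rw [this, ENNReal.ofReal_one]

/-- Under `condLaw r`, on `a_1 = k + 1` the point `T x` has law `condLaw (condS r k)`; this is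
the change of variables `x = 1 / (k + 1 + t)`. -/
lemma condLaw_branch {r : ℝ} (hr : 0 ≤ r) (k : ℕ) {B : Set ℝ} (hB : MeasurableSet B) :
    condLaw r {x | cfA 1 x = k + 1 ∧ gaussMap x ∈ B}
      = ENNReal.ofReal (condW r k) * condLaw (condS r k) B := by
  have hm : MeasurableSet {x | cfA 1 x = k + 1 ∧ gaussMap x ∈ B} :=
    ((measurable_cfA 1) (measurableSet_singleton (k + 1))).inter (measurable_gaussMap hB)
  rw [condLaw_apply r hm, condLaw_apply _ hB, branch_eq]
  have hk : (0 : ℝ) ≤ k := k.cast_nonneg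
  have hder : ∀ t ∈ B ∩ irrI, HasDerivWithinAt (fun t : ℝ => 1 / ((k : ℝ) + 1 + t))
      (-1 / ((k : ℝ) + 1 + t) ^ 2) (B ∩ irrI) t := by
    intro t ht
    have h0 := ht.2.1
    have h : (k : ℝ) + 1 + t ≠ 0 := by positivity
    have := ((hasDerivAt_id t).const_add ((k : ℝ) + 1)).inv h
    simp only [one_div]
    exact this.hasDerivWithinAt
  have hinj : Set.InjOn (fun t : ℝ => 1 / ((k : ℝ) + 1 + t)) (B ∩ irrI) := by
    intro t _ u _ h
    simp only [one_div, inv_inj] at h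
    linarith
  rw [lintegral_image_eq_lintegral_abs_deriv_mul (hB.inter measurableSet_irrI) hder hinj,
    ← lintegral_const_mul' _ _ ENNReal.ofReal_ne_top]
  refine setLIntegral_congr_fun (hB.inter measurableSet_irrI) ?_
  intro t ht
  have h0 := ht.2.1
  simp only
  rw [← ENNReal.ofReal_mul (abs_nonneg _), ← ENNReal.ofReal_mul (condW_nonneg hr k)]
  congr 1
  rw [neg_div, abs_neg, abs_of_pos (by positivity)]
  unfold condW condS
  have h1 : (k : ℝ) + 1 + t ≠ 0 := by positivity
  have h2 : (k : ℝ) + 1 + r ≠ 0 := by positivity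
  have h3 : (k : ℝ) + 2 + r ≠ 0 := by positivity
  have h4 : (k : ℝ) + 1 + t + r ≠ 0 := by positivity
  have e1 : 1 + r * (1 / ((k : ℝ) + 1 + t)) = (k + 1 + t + r) / (k + 1 + t) := by
    field_simp
  have e2 : 1 + 1 / ((k : ℝ) + 1 + r) * t = (k + 1 + t + r) / (k + 1 + r) := by
    field_simp; ring
  have e3 : 1 + 1 / ((k : ℝ) + 1 + r) = (k + 2 + r) / (k + 1 + r) := by
    field_simp; ring
  rw [e1, e2, e3]
  field_simp

/-- Disintegration of `condLaw r` along the value of `a_1`. -/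
lemma condLaw_markov {r : ℝ} (hr : 0 ≤ r) {G : ℕ → Set ℝ} (hG : ∀ k, MeasurableSet (G k)) :
    condLaw r {x | gaussMap x ∈ G (cfA 1 x)}
      = ∑' k : ℕ, ENNReal.ofReal (condW r k) * condLaw (condS r k) (G (k + 1)) := by
  have h : {x | gaussMap x ∈ G (cfA 1 x)} =ᵐ[condLaw r]
      ⋃ k : ℕ, {x | cfA 1 x = k + 1 ∧ gaussMap x ∈ G (k + 1)} := by
    filter_upwards [ae_irrI r] with x hx
    apply propext
    change gaussMap x ∈ G (cfA 1 x) ↔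
      x ∈ ⋃ k : ℕ, {x | cfA 1 x = k + 1 ∧ gaussMap x ∈ G (k + 1)}
    simp only [Set.mem_iUnion, Set.mem_ofPred_eq]
    constructor
    · intro h
      obtain ⟨k, hk⟩ := Nat.exists_eq_add_of_le' (cfA_pos hx)
      exact ⟨k, hk, hk ▸ h⟩
    · rintro ⟨k, hk, h⟩
      rwa [hk]
  rw [measure_congr h, measure_iUnion]
  · exact tsum_congr fun k => condLaw_branch hr k (hG _)
  · intro i j hij
    refine Set.disjoint_left.2 ?_
    rintro x ⟨h1, -⟩ ⟨h2, -⟩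
    exact hij (by omega)
  · intro k
    exact ((measurable_cfA 1) (measurableSet_singleton (k + 1))).inter
      (measurable_gaussMap (hG _))

lemma tsum_condW {r : ℝ} (hr : 0 ≤ r) : ∑' k : ℕ, ENNReal.ofReal (condW r k) = 1 := by
  have h := condLaw_markov hr (G := fun _ => Set.univ) (fun _ => MeasurableSet.univ)
  simp only [condLaw_univ (condS_nonneg hr _), mul_one] at h
  rw [← h, ← condLaw_univ hr]
  simp

/-- A bound valid for all the conditional laws is preserved by pulling back under `T`. -/
lemma condLaw_preimage_le {B : Set ℝ} (hB : MeasurableSet B) {C : ℝ≥0∞}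
    (h : ∀ r, 0 ≤ r → r ≤ 1 → condLaw r B ≤ C) (n : ℕ) :
    ∀ r, 0 ≤ r → r ≤ 1 → condLaw r {x | gaussMap^[n] x ∈ B} ≤ C := by
  induction n with
  | zero => simpa using h
  | succ n ih =>
    intro r hr _
    have hm : MeasurableSet {x | gaussMap^[n] x ∈ B} := (measurable_gaussMap.iterate n) hB
    have := condLaw_markov hr (G := fun _ => {x | gaussMap^[n] x ∈ B}) (fun _ => hm)
    simp only [Set.mem_ofPred_eq, ← Function.iterate_succ_apply] at this
    rw [this]
    calc _ ≤ ∑' k : ℕ, ENNReal.ofReal (condW r k) * C :=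
          ENNReal.tsum_le_tsum fun k => by
            gcongr; exact ih _ (condS_nonneg hr k) (condS_le_one hr k)
      _ = C := by rw [ENNReal.tsum_mul_right, tsum_condW hr, one_mul]

/-- If `B` has probability at most `C` under all conditional laws, then so has `T^2 x ∈ B`
conditionally on `a_1 a_2 < φ`. -/
lemma condLaw_two_step {B : Set ℝ} (hB : MeasurableSet B) {C : ℝ≥0∞}
    (h : ∀ r, 0 ≤ r → r ≤ 1 → condLaw r B ≤ C) (φ : ℝ) {r : ℝ} (hr : 0 ≤ r) :
    condLaw r {x | (cfA 1 x : ℝ) * cfA 1 (gaussMap x) < φ ∧ gaussMap (gaussMap x) ∈ B}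
      ≤ C * condLaw r {x | (cfA 1 x : ℝ) * cfA 1 (gaussMap x) < φ} := by
  classical
  -- One step: an event about `a_1` followed by `T x ∈ B`.
  have one : ∀ (K : Set ℕ) (s : ℝ), 0 ≤ s →
      condLaw s {y | cfA 1 y ∈ K ∧ gaussMap y ∈ B} ≤ C * condLaw s {y | cfA 1 y ∈ K} := by
    intro K s hs
    have e1 := condLaw_markov hs (G := fun k => if k ∈ K then B else ∅)
      (fun k => by split_ifs; exacts [hB, MeasurableSet.empty])
    have e2 := condLaw_markov hs (G := fun k => if k ∈ K then Set.univ else ∅)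
      (fun k => by split_ifs; exacts [MeasurableSet.univ, MeasurableSet.empty])
    have s1 : {y | cfA 1 y ∈ K ∧ gaussMap y ∈ B}
        = {x | gaussMap x ∈ (if cfA 1 x ∈ K then B else ∅)} := by
      ext y; by_cases hy : cfA 1 y ∈ K <;> simp [hy]
    have s2 : {y | cfA 1 y ∈ K}
        = {x | gaussMap x ∈ (if cfA 1 x ∈ K then Set.univ else ∅ : Set ℝ)} := by
      ext y; by_cases hy : cfA 1 y ∈ K <;> simp [hy]
    rw [s1, s2, e1, e2, ← ENNReal.tsum_mul_left]
    refine ENNReal.tsum_le_tsum fun k => ?_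
    by_cases hk : k + 1 ∈ K
    · simp only [hk, if_true, condLaw_univ (condS_nonneg hs k), mul_one]
      rw [mul_comm]
      gcongr
      exact h _ (condS_nonneg hs k) (condS_le_one hs k)
    · simp [hk]
  have mK : ∀ k : ℕ, MeasurableSet {y : ℝ | (k : ℝ) * cfA 1 y < φ} := fun k =>
    (measurable_cfA 1) (MeasurableSet.of_discrete (s := {n : ℕ | (k : ℝ) * n < φ}))
  have e1 := condLaw_markov hr (G := fun k => {y | (k : ℝ) * cfA 1 y < φ ∧ gaussMap y ∈ B})
    (fun k => (mK k).inter (measurable_gaussMap hB))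
  have e2 := condLaw_markov hr (G := fun k => {y | (k : ℝ) * cfA 1 y < φ}) mK
  simp only [Set.mem_ofPred_eq] at e1 e2
  rw [e1, e2, ← ENNReal.tsum_mul_left]
  refine ENNReal.tsum_le_tsum fun k => ?_
  calc _ ≤ ENNReal.ofReal (condW r k) * (C * condLaw (condS r k)
          {y | ((k + 1 : ℕ) : ℝ) * cfA 1 y < φ}) := by
        gcongr
        exact one {n : ℕ | ((k + 1 : ℕ) : ℝ) * n < φ} _ (condS_nonneg hr k)
    _ = _ := by ring

/-! ### The probability of a large product of consecutive partial quotients -/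

lemma measurableSet_bigProd (φ : ℝ) :
    MeasurableSet {x | φ ≤ (cfA 1 x : ℝ) * cfA 1 (gaussMap x)} := by
  have h1 : Measurable fun x => (cfA 1 x : ℝ) := measurable_from_top.comp (measurable_cfA 1)
  exact measurableSet_le measurable_const (h1.mul (h1.comp measurable_gaussMap))

lemma condLaw_prod_eq (φ : ℝ) {r : ℝ} (hr : 0 ≤ r) :
    condLaw r {x | φ ≤ (cfA 1 x : ℝ) * cfA 1 (gaussMap x)}
      = ∑' k : ℕ, ENNReal.ofReal (condW r k) *
          condLaw (condS r k) {y | ⌈φ / ((k : ℝ) + 1)⌉₊ ≤ cfA 1 y} := by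
  have := condLaw_markov hr (G := fun k => {y | φ ≤ (k : ℝ) * cfA 1 y}) (fun k =>
    (measurable_cfA 1) (MeasurableSet.of_discrete (s := {n : ℕ | φ ≤ (k : ℝ) * n})))
  simp only [Set.mem_ofPred_eq] at this
  rw [this]
  congr! 5 with k
  ext y
  rw [Nat.ceil_le, div_le_iff₀ (by positivity), mul_comm]
  push_cast
  rfl

lemma condLaw_prod_ge {φ : ℝ} (hφ : 1 < φ) {r : ℝ} (hr : 0 ≤ r) (hr1 : r ≤ 1) :
    ENNReal.ofReal (Real.log φ / φ / 12)
      ≤ condLaw r {x | φ ≤ (cfA 1 x : ℝ) * cfA 1 (gaussMap x)} := by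
  rw [condLaw_prod_eq φ hr]
  have hφ0 : 0 < φ := by linarith
  have key : ∀ k ∈ Finset.range ⌊φ⌋₊, ENNReal.ofReal (1 / (12 * φ) * ((k : ℝ) + 1)⁻¹)
      ≤ ENNReal.ofReal (condW r k) *
          condLaw (condS r k) {y | ⌈φ / ((k : ℝ) + 1)⌉₊ ≤ cfA 1 y} := by
    intro k hk
    have hk0 : (0 : ℝ) ≤ k := k.cast_nonneg
    have hkφ : (k : ℝ) + 1 ≤ φ := by
      have := (Nat.le_floor_iff hφ0.le).1 (Nat.succ_le_of_lt (Finset.mem_range.1 hk))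
      push_cast at this; exact this
    have h1 : 1 ≤ φ / ((k : ℝ) + 1) := by rw [le_div_iff₀ (by positivity)]; linarith
    have hc1 : 1 ≤ ⌈φ / ((k : ℝ) + 1)⌉₊ := Nat.one_le_ceil_iff.2 (by positivity)
    have hc2 : (⌈φ / ((k : ℝ) + 1)⌉₊ : ℝ) ≤ 2 * φ / ((k : ℝ) + 1) := by
      have := (Nat.ceil_lt_add_one (by positivity : 0 ≤ φ / ((k : ℝ) + 1))).le
      have e : 2 * φ / ((k : ℝ) + 1) = φ / ((k : ℝ) + 1) + φ / ((k : ℝ) + 1) := by ring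
      linarith
    rw [condLaw_tail (condS_nonneg hr k) hc1, ← ENNReal.ofReal_mul (condW_nonneg hr k)]
    apply ENNReal.ofReal_le_ofReal
    set m : ℝ := (⌈φ / ((k : ℝ) + 1)⌉₊ : ℝ) with hm
    have hm1 : (1 : ℝ) ≤ m := by rw [hm]; exact_mod_cast hc1
    have hs0 := condS_nonneg hr k
    have t1 : ((k : ℝ) + 1) / (2 * φ) ≤ (1 + condS r k) / (m + condS r k) := by
      rw [le_div_iff₀ (by positivity) ] at hc2
      rw [div_le_div_iff₀ (by positivity) (by positivity)]
      nlinarith [mul_nonneg hs0 (sub_nonneg.2 hkφ), mul_nonneg hs0 hφ0.le]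
    have t2 : 1 / (((k : ℝ) + 2) * (k + 3)) ≤ condW r k := by
      unfold condW
      apply div_le_div₀ <;> first | positivity | linarith | skip
      apply mul_le_mul <;> first | positivity | linarith
    calc 1 / (12 * φ) * ((k : ℝ) + 1)⁻¹
        ≤ 1 / (((k : ℝ) + 2) * (k + 3)) * (((k : ℝ) + 1) / (2 * φ)) := by
          rw [← one_div, div_mul_div_comm, div_mul_div_comm,
            div_le_div_iff₀ (by positivity) (by positivity)]
          have : 0 ≤ φ * (5 * (k : ℝ) ^ 2 + 7 * k) := by positivity
          nlinarith
      _ ≤ _ := mul_le_mul t2 t1 (by positivity) (condW_nonneg hr k)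
  refine le_trans ?_ ((Finset.sum_le_sum key).trans (ENNReal.sum_le_tsum _))
  rw [← ENNReal.ofReal_sum_of_nonneg (fun k _ => by positivity), ← Finset.mul_sum]
  apply ENNReal.ofReal_le_ofReal
  have hh := log_add_one_le_harmonic ⌊φ⌋₊
  simp only [harmonic, Rat.cast_sum, Rat.cast_inv, Rat.cast_natCast] at hh
  push_cast at hh
  have hlog : Real.log φ ≤ Real.log ((⌊φ⌋₊ : ℝ) + 1) :=
    Real.log_le_log hφ0 (Nat.lt_floor_add_one φ).le
  calc Real.log φ / φ / 12 = 1 / (12 * φ) * Real.log φ := by field_simp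
    _ ≤ _ := by gcongr; exact hlog.trans hh

lemma ennreal_tsum_split (f : ℕ → ℝ≥0∞) (N : ℕ) :
    ∑' k, f k = ∑ k ∈ Finset.range N, f k + ∑' k, f (k + N) :=
  (Summable.sum_add_tsum_nat_add' (f := f) ENNReal.summable).symm

/-- The contribution of `a_1 > N` to the probability of `a_1 a_2 ≥ φ`. -/
lemma condLaw_prod_tail_le {φ : ℝ} (hφ0 : 0 < φ) {N : ℕ} (hN : φ ≤ (N : ℝ) + 1) {r : ℝ} (hr : 0 ≤ r) (hr1 : r ≤ 1) :
    ∑' k : ℕ, ENNReal.ofReal (condW r (k + N)) * condLaw (condS r (k + N))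
        {y | ⌈φ / (((k + N : ℕ) : ℝ) + 1)⌉₊ ≤ cfA 1 y} ≤ ENNReal.ofReal (2 / φ) := by
    calc _ ≤ ∑' k : ℕ, ENNReal.ofReal (condW r (k + N)) * 1 := by
          refine ENNReal.tsum_le_tsum fun k => ?_
          gcongr
          exact (measure_mono (Set.subset_univ _)).trans (condLaw_univ (condS_nonneg hr _)).le
      _ ≤ condLaw r {x | N + 1 ≤ cfA 1 x} := by
          -- The tail sum of the weights is the probability of `a_1 > N`.
          classical
          have e := condLaw_markov hr
            (G := fun k => if N + 1 ≤ k then Set.univ else ∅)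
            (fun k => by split_ifs; exacts [MeasurableSet.univ, MeasurableSet.empty])
          have s : {x | N + 1 ≤ cfA 1 x} = {x | gaussMap x ∈
              (if N + 1 ≤ cfA 1 x then Set.univ else ∅ : Set ℝ)} := by
            ext y; simp
          rw [s, e]
          refine le_of_le_of_eq ?_ (ennreal_tsum_split _ N).symm
          refine le_trans (ENNReal.tsum_le_tsum fun k => ?_) le_add_self
          rw [if_pos (by omega), condLaw_univ (condS_nonneg hr _)]
      _ ≤ _ := by
          rw [condLaw_tail hr (by omega)]
          apply ENNReal.ofReal_le_ofReal
          push_cast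
          apply div_le_div₀ <;> first | positivity | linarith

lemma condLaw_prod_le {φ : ℝ} (hφ : Real.exp 1 ≤ φ) {r : ℝ} (hr : 0 ≤ r) (hr1 : r ≤ 1) :
    condLaw r {x | φ ≤ (cfA 1 x : ℝ) * cfA 1 (gaussMap x)}
      ≤ ENNReal.ofReal (10 * (Real.log φ / φ)) := by
  have hφ0 : 0 < φ := (Real.exp_pos 1).trans_le hφ
  have hφ1 : 1 ≤ φ := by linarith [Real.add_one_le_exp (1 : ℝ)]
  have hlog1 : 1 ≤ Real.log φ := (Real.le_log_iff_exp_le hφ0).2 hφ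
  have hh := harmonic_floor_le_one_add_log φ hφ1
  simp only [harmonic, Rat.cast_sum, Rat.cast_inv, Rat.cast_natCast] at hh
  push_cast at hh
  have hN := (Nat.lt_floor_add_one φ).le
  generalize ⌊φ⌋₊ = N at hh hN
  rw [condLaw_prod_eq φ hr, ennreal_tsum_split _ N]
  have hA : ∀ k ∈ Finset.range N, ENNReal.ofReal (condW r k) *
          condLaw (condS r k) {y | ⌈φ / ((k : ℝ) + 1)⌉₊ ≤ cfA 1 y}
      ≤ ENNReal.ofReal (4 / φ * ((k : ℝ) + 1)⁻¹) := by
    intro k _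
    have hk0 : (0 : ℝ) ≤ k := k.cast_nonneg
    have hc1 : 1 ≤ ⌈φ / ((k : ℝ) + 1)⌉₊ := Nat.one_le_ceil_iff.2 (by positivity)
    have hc2 := Nat.le_ceil (φ / ((k : ℝ) + 1))
    rw [condLaw_tail (condS_nonneg hr k) hc1, ← ENNReal.ofReal_mul (condW_nonneg hr k)]
    apply ENNReal.ofReal_le_ofReal
    set m : ℝ := (⌈φ / ((k : ℝ) + 1)⌉₊ : ℝ) with hm
    have hs0 := condS_nonneg hr k
    have hs1 := condS_le_one hr k
    have t1 : (1 + condS r k) / (m + condS r k) ≤ 2 / (φ / ((k : ℝ) + 1)) := by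
      apply div_le_div₀ <;> first | positivity | linarith
    have t2 : condW r k ≤ 2 / (((k : ℝ) + 1) * (k + 1)) := by
      unfold condW
      apply div_le_div₀ <;> first | positivity | linarith | skip
      apply mul_le_mul <;> first | positivity | linarith
    calc condW r k * ((1 + condS r k) / (m + condS r k))
        ≤ 2 / (((k : ℝ) + 1) * (k + 1)) * (2 / (φ / ((k : ℝ) + 1))) :=
          mul_le_mul t2 t1 (by positivity) (by positivity)
      _ = _ := by field_simp; norm_num
  refine (add_le_add (Finset.sum_le_sum hA) (condLaw_prod_tail_le hφ0 hN hr hr1)).trans ?_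
  rw [← ENNReal.ofReal_sum_of_nonneg (fun k _ => by positivity), ← Finset.mul_sum,
    ← ENNReal.ofReal_add (by positivity) (by positivity)]
  apply ENNReal.ofReal_le_ofReal
  calc _ ≤ 4 / φ * (1 + Real.log φ) + 2 / φ := by gcongr
    _ = (6 + 4 * Real.log φ) / φ := by ring
    _ ≤ 10 * Real.log φ / φ := by gcongr; linarith
    _ = _ := by ring

/-! ### Divergence: avoiding large products forever is a null event -/

/-- The points none of whose products `a_{2i+1} a_{2i+2}`, `i < m`, reaches `φ i`. -/
def avoidSet (φ : ℕ → ℝ) (m : ℕ) : Set ℝ :=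
  {x | ∀ i < m, (cfA 1 (gaussMap^[2 * i] x) : ℝ) * cfA 1 (gaussMap (gaussMap^[2 * i] x)) < φ i}

lemma measurableSet_avoidSet (φ : ℕ → ℝ) (m : ℕ) : MeasurableSet (avoidSet φ m) := by
  have : avoidSet φ m = ⋂ i ∈ Finset.range m, (gaussMap^[2 * i]) ⁻¹'
      {x | φ i ≤ (cfA 1 x : ℝ) * cfA 1 (gaussMap x)}ᶜ := by
    ext x; simp [avoidSet]
  rw [this]
  exact Finset.measurableSet_biInter _ fun i _ =>
    (measurable_gaussMap.iterate _) (measurableSet_bigProd _).compl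

lemma avoidSet_succ (φ : ℕ → ℝ) (m : ℕ) :
    avoidSet φ (m + 1) = {x | (cfA 1 x : ℝ) * cfA 1 (gaussMap x) < φ 0 ∧
      gaussMap (gaussMap x) ∈ avoidSet (fun i => φ (i + 1)) m} := by
  ext x
  have e : ∀ i, gaussMap^[2 * (i + 1)] x = gaussMap^[2 * i] (gaussMap (gaussMap x)) :=
    fun i => rfl
  simp only [avoidSet, Set.mem_ofPred_eq]
  constructor
  · intro h
    refine ⟨h 0 (by omega), fun i hi => ?_⟩
    rw [← e]; exact h (i + 1) (by omega)
  · rintro ⟨h0, h⟩ i hi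
    cases i with
    | zero => exact h0
    | succ i => rw [e]; exact h i (by omega)

lemma condLaw_avoidSet_le (m : ℕ) : ∀ (φ : ℕ → ℝ), (∀ i, 1 < φ i) → ∀ r, 0 ≤ r → r ≤ 1 →
    condLaw r (avoidSet φ m)
      ≤ ENNReal.ofReal (Real.exp (-∑ i ∈ Finset.range m, Real.log (φ i) / φ i / 12)) := by
  induction m with
  | zero =>
    intro φ _ r hr _
    simpa using (measure_mono (Set.subset_univ _)).trans (condLaw_univ hr).le
  | succ m ih =>
    intro φ hφ r hr hr1
    rw [avoidSet_succ]
    refine (condLaw_two_step (measurableSet_avoidSet _ m)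
      (ih (fun i => φ (i + 1)) fun i => hφ (i + 1)) (φ 0) hr).trans ?_
    have hprob : IsProbabilityMeasure (condLaw r) := ⟨condLaw_univ hr⟩
    have hc : {x | (cfA 1 x : ℝ) * cfA 1 (gaussMap x) < φ 0}
        = {x | φ 0 ≤ (cfA 1 x : ℝ) * cfA 1 (gaussMap x)}ᶜ := by ext x; simp
    have h0 : condLaw r {x | (cfA 1 x : ℝ) * cfA 1 (gaussMap x) < φ 0}
        ≤ ENNReal.ofReal (Real.exp (-(Real.log (φ 0) / φ 0 / 12))) := by
      rw [hc, prob_compl_eq_one_sub (measurableSet_bigProd _)]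
      have hnn : 0 ≤ Real.log (φ 0) / φ 0 / 12 := by
        have := Real.log_pos (hφ 0)
        have := hφ 0
        positivity
      calc _ ≤ 1 - ENNReal.ofReal (Real.log (φ 0) / φ 0 / 12) :=
            tsub_le_tsub_left (condLaw_prod_ge (hφ 0) hr hr1) 1
        _ = ENNReal.ofReal (1 - Real.log (φ 0) / φ 0 / 12) := by
            rw [ENNReal.ofReal_sub _ hnn, ENNReal.ofReal_one]
        _ ≤ _ := ENNReal.ofReal_le_ofReal (Real.one_sub_le_exp_neg _)
    refine (mul_le_mul_right h0 _).trans ?_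
    rw [← ENNReal.ofReal_mul (Real.exp_pos _).le, ← Real.exp_add, Finset.sum_range_succ',
      neg_add]

lemma condLaw_avoid_eq_zero {φ : ℕ → ℝ} (hφ : ∀ i, 1 < φ i)
    (hdiv : ¬ Summable fun i => Real.log (φ i) / φ i) {r : ℝ} (hr : 0 ≤ r) (hr1 : r ≤ 1) :
    condLaw r (⋂ m, avoidSet φ m) = 0 := by
  have hnn : ∀ i, 0 ≤ Real.log (φ i) / φ i / 12 := fun i => by
    have := Real.log_pos (hφ i)
    have := hφ i
    positivity
  have hdiv' : ¬ Summable fun i => Real.log (φ i) / φ i / 12 := fun h =>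
    hdiv ((h.mul_right 12).congr fun i => by ring)
  have ht := (not_summable_iff_tendsto_nat_atTop_of_nonneg hnn).1 hdiv'
  have hlim : Tendsto (fun m => ENNReal.ofReal
      (Real.exp (-∑ i ∈ Finset.range m, Real.log (φ i) / φ i / 12))) atTop (𝓝 0) := by
    rw [← ENNReal.ofReal_zero]
    exact ENNReal.tendsto_ofReal (Real.tendsto_exp_neg_atTop_nhds_zero.comp ht)
  refine le_antisymm (ge_of_tendsto' hlim fun m => ?_) zero_le
  exact (measure_mono (Set.iInter_subset _ m)).trans (condLaw_avoidSet_le m φ hφ r hr hr1)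

/-- A divergent series diverges along one parity class of indices, beyond any given point. -/
lemma exists_parity {u : ℕ → ℝ} (hu : ¬ Summable u) (N : ℕ) :
    ∃ M, N ≤ M ∧ ¬ Summable fun i => u (M + 1 + 2 * i) := by
  by_contra! h
  apply hu
  rw [← summable_nat_add_iff (N + 1)]
  refine Summable.even_add_odd (f := fun n => u (n + (N + 1))) ?_ ?_
  · exact (h N le_rfl).congr fun i => by congr 1; ring
  · exact (h (N + 1) (by omega)).congr fun i => by congr 1; ring

lemma volume_irrI : volume irrI = 1 := by
  rw [measure_congr ae_irrI_eq]; simp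

lemma E2_subset (Φ : ℕ → ℝ) : E2 Φ ⊆ irrI := by
  rintro x ⟨⟨h0, h1⟩, hx, -⟩
  exact ⟨lt_of_le_of_ne h0 fun h => hx.ne_zero h.symm, h1, hx⟩

theorem kleinbock_wadleigh_measure (Φ : ℕ → ℝ) (hΦ1 : ∀ n, 1 < Φ n)
    (hΦ : Tendsto Φ atTop atTop) :
    (Summable (fun n => Real.log (Φ n) / Φ n) → volume (E2 Φ) = 0) ∧
    (¬ Summable (fun n => Real.log (Φ n) / Φ n) → volume (E2 Φ) = 1) := by
  constructor
  · intro hsum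
    obtain ⟨N, hN⟩ := eventually_atTop.1 (hΦ.eventually_ge_atTop (Real.exp 1))
    -- Shifting by `N + 1` makes every `Φ` at least `e` and every index positive.
    have hs : Summable fun n => 10 * (Real.log (Φ (n + (N + 1))) / Φ (n + (N + 1))) :=
      ((summable_nat_add_iff (N + 1)).2 hsum).mul_left 10
    have hBC := measure_setOfPred_frequently_eq_zero (μ := condLaw 0)
      (p := fun n x => Φ (n + (N + 1)) ≤
        (cfA (n + (N + 1)) x : ℝ) * cfA (n + (N + 1) + 1) x) ?_
    · rw [condLaw_zero, Measure.restrict_apply₀' measurableSet_irrI.nullMeasurableSet] at hBC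
      refine measure_mono_null ?_ hBC
      intro x hx
      refine ⟨?_, E2_subset Φ hx⟩
      have hf := hx.2.2
      rw [← map_add_atTop_eq_nat (N + 1), frequently_map] at hf
      exact hf
    · refine ne_top_of_le_ne_top hs.tsum_ofReal_ne_top (ENNReal.tsum_le_tsum fun n => ?_)
      have h := condLaw_preimage_le (measurableSet_bigProd (Φ (n + (N + 1))))
        (fun r hr hr1 => condLaw_prod_le (hN (n + (N + 1)) (by omega)) hr hr1) (n + N) 0 le_rfl zero_le_one
      refine le_trans (le_of_eq ?_) h
      congr 1
      ext x
      simp only [Set.mem_ofPred_eq]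
      rw [cfA_succ (n + (N + 1)), ← add_assoc n N 1, cfA_succ (n + N),
        Function.iterate_succ_apply']
  · intro hdiv
    have hnull : volume (irrI \ E2 Φ) = 0 := by
      choose M hM hMdiv using exists_parity hdiv
      have hz : ∀ N, condLaw 0 {x | gaussMap^[M N] x ∈
          ⋂ m, avoidSet (fun i => Φ (M N + 1 + 2 * i)) m} = 0 := fun N =>
        le_antisymm (condLaw_preimage_le (MeasurableSet.iInter fun m => measurableSet_avoidSet _ m)
          (fun r hr hr1 => (condLaw_avoid_eq_zero (fun i => hΦ1 _) (hMdiv N) hr hr1).le)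
          (M N) 0 le_rfl zero_le_one) zero_le
      have hU := measure_iUnion_null hz
      rw [condLaw_zero, Measure.restrict_apply₀' measurableSet_irrI.nullMeasurableSet] at hU
      refine measure_mono_null ?_ hU
      rintro x ⟨hx, hE⟩
      refine ⟨?_, hx⟩
      have hnf : ¬ ∃ᶠ n in atTop, Φ n ≤ (cfA n x : ℝ) * (cfA (n + 1) x : ℝ) := fun h =>
        hE ⟨⟨hx.1.le, hx.2.1⟩, hx.2.2, h⟩
      rw [not_frequently] at hnf
      obtain ⟨N, hN⟩ := eventually_atTop.1 hnf
      refine Set.mem_iUnion.2 ⟨N, Set.mem_iInter.2 fun m i _ => ?_⟩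
      have h := not_le.1 (hN (M N + 1 + 2 * i) (by have := hM N; omega))
      have e : M N + 1 + 2 * i = (2 * i + M N) + 1 := by ring
      rw [← Function.iterate_succ_apply' gaussMap, ← Function.iterate_add_apply,
        ← Function.iterate_add_apply, ← cfA_succ, ← cfA_succ]
      rw [e] at h
      have e2 : (2 * i).succ + M N + 1 = 2 * i + M N + 1 + 1 := by omega
      rw [e2]
      change _ < Φ (M N + 1 + 2 * i)
      rw [e]
      exact h
    have h1 : volume irrI ≤ volume (E2 Φ) := by
      have hsub : irrI ⊆ E2 Φ ∪ irrI \ E2 Φ := fun x hx => by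
        by_cases h : x ∈ E2 Φ
        exacts [Or.inl h, Or.inr ⟨hx, h⟩]
      simpa [hnull] using (measure_mono hsub).trans (measure_union_le (μ := volume) _ _)
    exact le_antisymm ((measure_mono (E2_subset Φ)).trans volume_irrI.le)
      (volume_irrI ▸ h1)
end

section
/- (Łuczak) For any real numbers a, b > 1, the sets { x ∈ [0,1) : a_n(x) ≥ a^{b^n} for infinitely many n ∈ ℕ } and { x ∈ [0,1) : a_n(x) ≥ a^{b^n} for all sufficiently large n ∈ ℕ } both have Hausdorff dimension 1/(1+b). -/
/-!
Both sets are squeezed between an upper bound for the larger one (digits large infinitely often) and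
a lower bound for the smaller one (digits large eventually).

**Upper bound** (`dimH_frequently_le`). Let `s > 1 / (1 + b)` and let `P_n = a_1 ⋯ a_n` be the digit
products of `x`. If `a_n ≥ a ^ (b ^ n)` infinitely often and `1 < c < b`, then `log P_n / c ^ n` is
unbounded, so infinitely often it does not decrease and exceeds `1` after the step: for infinitely
many `n`, both `P_{n+1} ≥ P_n ^ c` and `P_{n+1} ≥ exp (c ^ (n + 1))` (`exists_jump`). The points of
a given cylinder of rank `n` with this property lie within distance `1 / (P_n * L)` of each other,
`L` being any lower bound for `P_{n+1}` (`jumpSet_dist`). Interpolating between the two bounds gives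
`L = P_n ^ c' * exp (κ * c ^ (n + 1))` for `c' < c` and some `κ > 0`. With `s * (1 + c') > 1`, the
sum over all cylinders of rank `n` of the `s`-th powers of the diameters is at most
`ζ (s * (1 + c')) ^ n * exp (-s * κ * c ^ (n + 1))`, which is summable in `n`.

**Lower bound** (`le_dimH_eventually`). Let `A_n = ⌈a ^ (b ^ n)⌉`. Send `t ∈ [0, 1)`, expanded in the
mixed radix `A_1, A_2, …` with digits `d_n`, to the continued fraction with digits `A_n + d_n`
(`lucPoint`), which lies in the smaller set. If `t` and `u` first differ at the `(n + 1)`-st digit,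
by `Δ`, then with `Q_n = A_1 ⋯ A_n` one has `|t - u| ≤ min (1 / Q_n) (2 * Δ / Q_{n+1})`, while the
image points are at distance at least a multiple of `Δ / (4 ^ n * Q_{n+1} ^ 2)` (`separation`).
Since `Q_{n+1}` is about `Q_n ^ b`, the inverse map is Hölder continuous with any exponent
`s < 1 / (1 + b)` (`lucPoint_holder`), and its image `[0, 1)` has dimension `1`; hence the dimension
of the Cantor set is at least `s`.
-/

open Filter Topology MeasureTheory
open scoped ENNReal NNReal

/-! ### Growth and the Gauss map -/

/-- Linear growth is absorbed by exponential growth. -/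
lemma exists_linear_le_pow (K κ c : ℝ) (hκ : 0 < κ) (hc : 1 < c) :
    ∃ C : ℝ, ∀ n : ℕ, K * n ≤ κ * c ^ n + C := by
  have h := (tendsto_pow_const_div_const_pow_of_one_lt 1 hc).const_mul K
  rw [mul_zero] at h
  obtain ⟨N, hN⟩ := eventually_atTop.1 (h.eventually (gt_mem_nhds hκ))
  refine ⟨∑ i ∈ Finset.range N, |K * i|, fun n => ?_⟩
  have hp : 0 < c ^ n := pow_pos (by linarith) n
  rcases lt_or_ge n N with hn | hn
  · have h1 : |K * n| ≤ ∑ i ∈ Finset.range N, |K * i| :=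
      Finset.single_le_sum (f := fun i : ℕ => |K * i|) (fun i _ => abs_nonneg _)
        (Finset.mem_range.2 hn)
    nlinarith [le_abs_self (K * n)]
  · have h1 := hN n hn
    have h2 : K * n ≤ κ * c ^ n := by
      rw [pow_one, ← mul_div_assoc, div_lt_iff₀ hp] at h1
      exact h1.le
    have h3 : 0 ≤ ∑ i ∈ Finset.range N, |K * i| := Finset.sum_nonneg fun i _ => abs_nonneg _
    linarith

/-- The irrational points of the unit interval, on which the Gauss map acts. -/
def irrUnit : Set ℝ := {x | 0 < x ∧ x < 1 ∧ Irrational x}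

lemma gaussMap_eq {x : ℝ} (hx : x ∈ irrUnit) : gaussMap x = Int.fract (1 / x) := by
  simp only [gaussMap, hx.1.ne', if_false, Int.fract]

lemma gaussMap_mem {x : ℝ} (hx : x ∈ irrUnit) : gaussMap x ∈ irrUnit := by
  have hi : Irrational (gaussMap x) := by
    rw [gaussMap_eq hx, Int.fract, one_div]
    exact (irrational_inv_iff.2 hx.2.2).sub_intCast _
  refine ⟨lt_of_le_of_ne ?_ (hi.ne_zero).symm, ?_, hi⟩
  · rw [gaussMap_eq hx]; exact Int.fract_nonneg _
  · rw [gaussMap_eq hx]; exact Int.fract_lt_one _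

lemma iterate_mem {x : ℝ} (hx : x ∈ irrUnit) (n : ℕ) : gaussMap^[n] x ∈ irrUnit := by
  induction n with
  | zero => exact hx
  | succ n ih => rw [Function.iterate_succ_apply']; exact gaussMap_mem ih

lemma one_div_iterate {x : ℝ} (hx : x ∈ irrUnit) (n : ℕ) :
    1 / gaussMap^[n] x = cfA (n + 1) x + gaussMap^[n + 1] x := by
  have hy := iterate_mem hx n
  rw [Function.iterate_succ_apply', gaussMap_eq hy, cfA, Nat.add_sub_cancel,
    natCast_floor_eq_intCast_floor (one_div_pos.2 hy.1).le, Int.floor_add_fract]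

lemma one_le_cfA {x : ℝ} (hx : x ∈ irrUnit) (n : ℕ) : 1 ≤ cfA (n + 1) x := by
  have hy := iterate_mem hx n
  rw [cfA, Nat.add_sub_cancel, Nat.one_le_floor_iff, le_div_iff₀ hy.1]
  linarith [hy.2.1]

/-- On a cylinder of rank `n` the `n`-th iterate of the Gauss map expands distances by at least
the square of the product of the digits. -/
lemma cylinder_contract {x y : ℝ} (hx : x ∈ irrUnit) (hy : y ∈ irrUnit) (n : ℕ)
    (h : ∀ i < n, cfA (i + 1) x = cfA (i + 1) y) :
    |x - y| * (∏ i ∈ Finset.range n, (cfA (i + 1) x : ℝ)) ^ 2 ≤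
      |gaussMap^[n] x - gaussMap^[n] y| := by
  induction n with
  | zero => simp
  | succ n ih =>
    have ih := ih fun i hi => h i (by omega)
    have ux := iterate_mem hx n
    have uy := iterate_mem hy n
    have vx := iterate_mem hx (n + 1)
    have vy := iterate_mem hy (n + 1)
    have ex := one_div_iterate hx n
    have ey := one_div_iterate hy n
    rw [← h n (by omega)] at ey
    have hk : (1 : ℝ) ≤ cfA (n + 1) x := by exact_mod_cast one_le_cfA hx n
    rw [Finset.prod_range_succ, mul_pow, ← mul_assoc]
    generalize gaussMap^[n + 1] x = x' at *
    generalize gaussMap^[n + 1] y = y' at *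
    generalize gaussMap^[n] x = u at *
    generalize gaussMap^[n] y = v at *
    generalize (cfA (n + 1) x : ℝ) = k at *
    have hu : u = 1 / (k + x') := by rw [← ex]; simp
    have hv : v = 1 / (k + y') := by rw [← ey]; simp
    have px : 0 < k + x' := by linarith [vx.1]
    have py : 0 < k + y' := by linarith [vy.1]
    have key : |u - v| * ((k + x') * (k + y')) = |x' - y'| := by
      have : u - v = (y' - x') / ((k + x') * (k + y')) := by
        rw [hu, hv]; field_simp; ring
      rw [this, abs_div, abs_of_pos (mul_pos px py), div_mul_cancel₀ _ (mul_pos px py).ne',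
        abs_sub_comm]
    have hk2 : k ^ 2 ≤ (k + x') * (k + y') := by nlinarith [vx.1, vy.1]
    calc _ ≤ |u - v| * k ^ 2 := by gcongr
      _ ≤ |u - v| * ((k + x') * (k + y')) := by gcongr
      _ = _ := key

/-! ### The upper bound -/

/-- `digitProd n x = a_1(x) ⋯ a_n(x)`. -/
noncomputable def digitProd (n : ℕ) (x : ℝ) : ℝ := ∏ i ∈ Finset.range n, (cfA (i + 1) x : ℝ)

lemma digitProd_succ (n : ℕ) (x : ℝ) :
    digitProd (n + 1) x = digitProd n x * cfA (n + 1) x := Finset.prod_range_succ _ _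

lemma one_le_digitProd {x : ℝ} (hx : x ∈ irrUnit) (n : ℕ) : 1 ≤ digitProd n x := by
  induction n with
  | zero => simp [digitProd]
  | succ n ih =>
    rw [digitProd_succ]
    exact one_le_mul_of_one_le_of_one_le ih (by exact_mod_cast one_le_cfA hx n)

/-- A large digit at infinitely many places forces, for every `1 < c < b`, infinitely many `n` at
which the digit product jumps at least to its `c`-th power and past `exp (c ^ (n + 1))`: otherwise
`log (digitProd n x) / c ^ n` would be bounded. -/
lemma exists_jump {a b c : ℝ} (ha : 1 < a) (hc : 1 < c) (hcb : c < b) {x : ℝ} (hx : x ∈ irrUnit)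
    (h : ∃ᶠ n : ℕ in atTop, a ^ (b ^ n) ≤ (cfA n x : ℝ)) (N : ℕ) :
    ∃ n ≥ N, Real.exp (c ^ (n + 1)) ≤ digitProd (n + 1) x ∧
      digitProd n x ^ c ≤ digitProd (n + 1) x := by
  by_contra! hcon
  have hc0 : 0 < c := by linarith
  set u : ℕ → ℝ := fun n => Real.log (digitProd n x) / c ^ n with hu
  have hpos : ∀ n, 0 < digitProd n x := fun n => by linarith [one_le_digitProd hx n]
  have hstep : ∀ n ≥ N, u (n + 1) ≤ max 1 (u n) := by
    intro n hn
    rcases lt_or_ge (digitProd (n + 1) x) (Real.exp (c ^ (n + 1))) with h1 | h1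
    · refine le_max_of_le_left ?_
      rw [hu]
      simp only
      rw [div_le_one (by positivity)]
      exact ((Real.log_lt_iff_lt_exp (hpos _)).2 h1).le
    · refine le_max_of_le_right ?_
      have h2 := hcon n hn h1
      have h3 := Real.log_lt_log (hpos _) h2
      rw [Real.log_rpow (hpos _)] at h3
      rw [hu]
      simp only
      rw [div_le_div_iff₀ (by positivity) (by positivity), pow_succ]
      nlinarith [pow_pos hc0 n]
  have hbdd : ∀ k, u (N + k) ≤ max 1 (u N) := by
    intro k
    induction k with
    | zero => exact le_max_right _ _
    | succ k ih => exact (hstep (N + k) (by omega)).trans (max_le (le_max_left _ _) ih)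
  -- `u n ≥ (b / c) ^ n * log a` for infinitely many `n`, which is unbounded.
  have hbig : Tendsto (fun n : ℕ => (b / c) ^ n * Real.log a) atTop atTop :=
    (tendsto_pow_atTop_atTop_of_one_lt ((one_lt_div hc0).2 hcb)).atTop_mul_const (Real.log_pos ha)
  obtain ⟨n, h1, h2, h3⟩ := (h.and_eventually
    ((hbig.eventually_gt_atTop (max 1 (u N))).and (eventually_ge_atTop (N + 1)))).exists
  obtain ⟨m, rfl⟩ : ∃ m, n = m + 1 := ⟨n - 1, by omega⟩
  have h4 : u (m + 1) ≤ max 1 (u N) := by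
    have := hbdd (m + 1 - N)
    rwa [show N + (m + 1 - N) = m + 1 by omega] at this
  have h5 : a ^ (b ^ (m + 1)) ≤ digitProd (m + 1) x := by
    rw [digitProd_succ]
    refine h1.trans (le_mul_of_one_le_left (Nat.cast_nonneg _) (one_le_digitProd hx m))
  have h6 := Real.log_le_log (Real.rpow_pos_of_pos (by linarith) _) h5
  rw [Real.log_rpow (by linarith)] at h6
  have h7 : (b / c) ^ (m + 1) * Real.log a ≤ u (m + 1) := by
    rw [hu]
    simp only
    rw [div_pow, div_mul_eq_mul_div]
    gcongr
  linarith

/-- The part of the cylinder with digits `w i + 1` on which the next digit makes the digit product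
jump as in `exists_jump`. -/
def jumpSet (c : ℝ) (n : ℕ) (w : Fin n → ℕ) : Set ℝ :=
  {x | x ∈ irrUnit ∧ (∀ i : Fin n, cfA (i + 1) x = w i + 1) ∧
    Real.exp (c ^ (n + 1)) ≤ digitProd (n + 1) x ∧ digitProd n x ^ c ≤ digitProd (n + 1) x}

lemma digitProd_of_mem {c : ℝ} {n : ℕ} {w : Fin n → ℕ} {x : ℝ} (hx : x ∈ jumpSet c n w) :
    digitProd n x = ∏ i, ((w i : ℝ) + 1) := by
  rw [digitProd, Finset.prod_range]
  refine Finset.prod_congr rfl fun i _ => ?_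
  rw [hx.2.1 i]; push_cast; rfl

lemma jumpSet_dist {c : ℝ} {n : ℕ} {w : Fin n → ℕ} {x y : ℝ} {L : ℝ} (hL : 0 < L)
    (hx : x ∈ jumpSet c n w) (hy : y ∈ jumpSet c n w)
    (hLx : L ≤ digitProd (n + 1) x) (hLy : L ≤ digitProd (n + 1) y) :
    |x - y| ≤ ((∏ i, ((w i : ℝ) + 1)) * L)⁻¹ := by
  have h1 := cylinder_contract hx.1 hy.1 n fun i hi => by
    rw [hx.2.1 ⟨i, hi⟩, hy.2.1 ⟨i, hi⟩]
  change |x - y| * digitProd n x ^ 2 ≤ _ at h1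
  have hT : ∀ z ∈ jumpSet c n w, L ≤ digitProd (n + 1) z →
      0 < gaussMap^[n] z ∧ gaussMap^[n] z ≤ (∏ i, ((w i : ℝ) + 1)) / L := by
    intro z hz hLz
    have hu := iterate_mem hz.1 n
    refine ⟨hu.1, ?_⟩
    rw [digitProd_succ, digitProd_of_mem hz] at hLz
    have h2 := one_div_iterate hz.1 n
    have h3 := (iterate_mem hz.1 (n + 1)).1
    have h4 : (cfA (n + 1) z : ℝ) * gaussMap^[n] z ≤ 1 := by
      rw [← le_div_iff₀ hu.1]; linarith
    rw [le_div_iff₀ hL]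
    have hP : 0 ≤ ∏ i, ((w i : ℝ) + 1) := Finset.prod_nonneg fun i _ => by positivity
    calc gaussMap^[n] z * L ≤ gaussMap^[n] z * ((∏ i, ((w i : ℝ) + 1)) * cfA (n + 1) z) := by
          have := hu.1
          gcongr
      _ = (∏ i, ((w i : ℝ) + 1)) * (cfA (n + 1) z * gaussMap^[n] z) := by ring
      _ ≤ (∏ i, ((w i : ℝ) + 1)) * 1 := by gcongr
      _ = _ := mul_one _
  obtain ⟨hx1, hx2⟩ := hT x hx hLx
  obtain ⟨hy1, hy2⟩ := hT y hy hLy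
  rw [digitProd_of_mem hx] at h1
  have hP : 0 < ∏ i, ((w i : ℝ) + 1) := Finset.prod_pos fun i _ => by positivity
  generalize (∏ i, ((w i : ℝ) + 1)) = P at *
  have h5 : |gaussMap^[n] x - gaussMap^[n] y| ≤ P / L := by
    rw [abs_le]; constructor <;> linarith
  have h6 := h1.trans h5
  rw [le_div_iff₀ hL] at h6
  rw [← one_div, le_div_iff₀ (by positivity)]
  have : |x - y| * (P * L) * P ≤ 1 * P := by nlinarith
  exact le_of_mul_le_mul_right this hP

lemma ediam_jumpSet_le_exp (c : ℝ) (n : ℕ) (w : Fin n → ℕ) :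
    Metric.ediam (jumpSet c n w) ≤ ENNReal.ofReal (Real.exp (-c ^ (n + 1))) := by
  rw [Metric.ediam_le_iff]
  intro x hx y hy
  rw [edist_dist, Real.dist_eq]
  refine ENNReal.ofReal_le_ofReal ?_
  refine (jumpSet_dist (Real.exp_pos _) hx hy hx.2.2.1 hy.2.2.1).trans ?_
  rw [Real.exp_neg]
  refine inv_anti₀ (Real.exp_pos _) (le_mul_of_one_le_left (Real.exp_pos _).le ?_)
  rw [← digitProd_of_mem hx]
  exact one_le_digitProd hx.1 n

/-- Interpolating between the two lower bounds for the next digit product, with weights `c' / c`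
and `1 - c' / c`, leaves room both for summing over the digits and for summing over `n`. -/
lemma ediam_jumpSet_rpow_le {c c' s : ℝ} (hc' : 0 < c') (hcc : c' < c) (hs : 0 < s) (n : ℕ)
    (w : Fin n → ℕ) :
    Metric.ediam (jumpSet c n w) ^ s ≤
      (∏ i, ENNReal.ofReal (((w i : ℝ) + 1) ^ (-(s * (1 + c'))))) *
        ENNReal.ofReal (Real.exp (-(s * (1 - c' / c)) * c ^ (n + 1))) := by
  have hc0 : 0 < c := hc'.trans hcc
  have hθ : 0 < c' / c := by positivity
  have hθ1 : c' / c < 1 := (div_lt_one hc0).2 hcc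
  set P : ℝ := ∏ i, ((w i : ℝ) + 1) with hP
  have hP0 : 0 < P := Finset.prod_pos fun i _ => by positivity
  set L : ℝ := P ^ c' * Real.exp ((1 - c' / c) * c ^ (n + 1)) with hL
  have hL0 : 0 < L := by positivity
  have hLe : ∀ x ∈ jumpSet c n w, L ≤ digitProd (n + 1) x := by
    intro x hx
    have h1 := hx.2.2.1
    have h2 := hx.2.2.2
    rw [digitProd_of_mem hx] at h2
    have hD : 0 < digitProd (n + 1) x := by linarith [one_le_digitProd hx.1 (n + 1)]
    calc L = (P ^ c) ^ (c' / c) * Real.exp (c ^ (n + 1)) ^ (1 - c' / c) := by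
          rw [hL, ← Real.rpow_mul hP0.le, ← Real.exp_mul, mul_div_cancel₀ _ hc0.ne', mul_comm (1 - _)]
      _ ≤ digitProd (n + 1) x ^ (c' / c) * digitProd (n + 1) x ^ (1 - c' / c) := by
          have : 0 ≤ 1 - c' / c := by linarith
          gcongr
      _ = digitProd (n + 1) x := by
          rw [← Real.rpow_add hD]; simp
  have hdiam : Metric.ediam (jumpSet c n w) ≤ ENNReal.ofReal ((P * L)⁻¹) := by
    rw [Metric.ediam_le_iff]
    intro x hx y hy
    rw [edist_dist, Real.dist_eq]
    exact ENNReal.ofReal_le_ofReal (jumpSet_dist hL0 hx hy (hLe x hx) (hLe y hy))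
  refine (ENNReal.rpow_le_rpow hdiam hs.le).trans (le_of_eq ?_)
  rw [ENNReal.ofReal_rpow_of_nonneg (by positivity) hs.le,
    ← ENNReal.ofReal_prod_of_nonneg (fun i _ => by positivity),
    ← ENNReal.ofReal_mul (Finset.prod_nonneg fun i _ => by positivity),
    Real.finsetProd_rpow _ _ (fun i _ => by positivity), ← hP]
  congr 1
  rw [hL, ← mul_assoc, ← Real.rpow_one_add' hP0.le (by linarith), ← Real.rpow_neg_one,
    ← Real.rpow_mul (by positivity), Real.mul_rpow (by positivity) (by positivity),
    ← Real.rpow_mul hP0.le, ← Real.exp_mul]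
  congr 2 <;> ring

lemma tsum_pi_prod (f : ℕ → ℝ≥0∞) (n : ℕ) :
    ∑' w : Fin n → ℕ, ∏ i, f (w i) = (∑' k, f k) ^ n := by
  induction n with
  | zero => simp
  | succ n ih =>
    rw [← (Fin.consEquiv fun _ : Fin (n + 1) => ℕ).tsum_eq, ENNReal.tsum_prod', pow_succ', ← ih,
      ← ENNReal.tsum_mul_right]
    refine tsum_congr fun k => ?_
    rw [← ENNReal.tsum_mul_left]
    refine tsum_congr fun w => ?_
    rw [Fin.prod_univ_succ]
    simp [Fin.consEquiv]

lemma tsum_pow_exp_ne_top {Z : ℝ≥0∞} (hZ : Z ≠ ∞) {κ c : ℝ} (hκ : 0 < κ) (hc : 1 < c) :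
    ∑' n : ℕ, Z ^ n * ENNReal.ofReal (Real.exp (-κ * c ^ (n + 1))) ≠ ∞ := by
  set z : ℝ := Z.toReal + 1 with hz
  have hz1 : 0 < z := by positivity
  obtain ⟨C, hC⟩ := exists_linear_le_pow (Real.log z + 1) (κ * c) c (by positivity) hc
  have hsum : Summable fun n : ℕ => Real.exp C * Real.exp (-1 * n) := by
    have := Real.summable_exp_nat_mul_iff.2 (show (-1 : ℝ) < 0 by norm_num)
    exact (this.congr fun n => by rw [mul_comm]).mul_left _
  refine ne_top_of_le_ne_top hsum.tsum_ofReal_ne_top (ENNReal.tsum_le_tsum fun n => ?_)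
  have hZz : Z ≤ ENNReal.ofReal z := by
    rw [← ENNReal.ofReal_toReal hZ]
    exact ENNReal.ofReal_le_ofReal (by linarith)
  calc _ ≤ ENNReal.ofReal z ^ n * ENNReal.ofReal (Real.exp (-κ * c ^ (n + 1))) := by gcongr
    _ = ENNReal.ofReal (z ^ n * Real.exp (-κ * c ^ (n + 1))) := by
        rw [← ENNReal.ofReal_pow hz1.le, ← ENNReal.ofReal_mul (by positivity)]
    _ ≤ _ := by
        refine ENNReal.ofReal_le_ofReal ?_
        rw [← Real.exp_log hz1, ← Real.exp_nat_mul, ← Real.exp_add, ← Real.exp_add,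
          Real.exp_le_exp]
        have := hC n
        rw [pow_succ]
        linarith

lemma dimH_frequently_le_of_lt {a b s : ℝ} (ha : 1 < a) (hb : 1 < b) (hs : 1 / (1 + b) < s) :
    dimH {x | x ∈ Set.Ico (0 : ℝ) 1 ∧ Irrational x ∧
        ∃ᶠ n : ℕ in atTop, a ^ (b ^ n) ≤ (cfA n x : ℝ)} ≤ ENNReal.ofReal s := by
  have hs0 : 0 < s := lt_trans (by positivity) hs
  -- Parameters `1 < c' < c < b` with `1 < s * (1 + c')`.
  obtain ⟨c', h1, h2⟩ : ∃ c', max 1 (1 / s - 1) < c' ∧ c' < b := by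
    refine exists_between (max_lt hb ?_)
    rw [div_lt_iff₀ (by linarith)] at hs
    rw [sub_lt_iff_lt_add, div_lt_iff₀ hs0]
    linarith
  obtain ⟨c, h3, h4⟩ := exists_between h2
  have hc'1 : 1 < c' := (le_max_left _ _).trans_lt h1
  have hc1 : 1 < c := hc'1.trans h3
  have hsc : 1 < s * (1 + c') := by
    have := (le_max_right _ _).trans_lt h1
    rw [sub_lt_iff_lt_add, div_lt_iff₀ hs0] at this
    linarith
  set Z : ℝ≥0∞ := ∑' k : ℕ, ENNReal.ofReal (((k : ℝ) + 1) ^ (-(s * (1 + c')))) with hZdef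
  have hZ : Z ≠ ∞ := by
    refine Summable.tsum_ofReal_ne_top ?_
    have := (summable_nat_add_iff 1).2 (Real.summable_nat_rpow.2 (neg_lt_neg hsc))
    simpa using this
  set κ : ℝ := s * (1 - c' / c) with hκdef
  have hκ : 0 < κ := mul_pos hs0 (sub_pos.2 ((div_lt_one (by linarith)).2 h3))
  set B : ℝ≥0∞ := ∑' n : ℕ, Z ^ n * ENNReal.ofReal (Real.exp (-κ * c ^ (n + 1))) with hB
  have hBtop : B ≠ ∞ := tsum_pow_exp_ne_top hZ hκ hc1
  lift s to ℝ≥0 using hs0.le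
  rw [ENNReal.ofReal_coe_nnreal]
  refine dimH_le_of_hausdorffMeasure_ne_top (ne_top_of_le_ne_top hBtop ?_)
  refine (Measure.hausdorffMeasure_le_liminf_tsum (β := ℕ) (l := atTop)
    (ι := fun N => Σ n : ℕ, (Fin (n + N) → ℕ)) (s : ℝ) _
    (fun N => ENNReal.ofReal (Real.exp (-c ^ (N + 1)))) ?_
    (fun N p => jumpSet c (p.1 + N) p.2) ?_ ?_).trans ?_
  · rw [← ENNReal.ofReal_zero]
    refine (ENNReal.continuous_ofReal.tendsto 0).comp ?_
    refine Real.tendsto_exp_neg_atTop_nhds_zero.comp ?_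
    exact (tendsto_pow_atTop_atTop_of_one_lt hc1).comp (tendsto_add_atTop_nat 1)
  · refine Eventually.of_forall fun N p => (ediam_jumpSet_le_exp c _ _).trans ?_
    refine ENNReal.ofReal_le_ofReal (Real.exp_le_exp.2 (neg_le_neg ?_))
    exact pow_le_pow_right₀ hc1.le (by omega)
  · refine Eventually.of_forall fun N x hx => ?_
    have hxi : x ∈ irrUnit :=
      ⟨lt_of_le_of_ne hx.1.1 hx.2.1.ne_zero.symm, hx.1.2, hx.2.1⟩
    obtain ⟨n, hn, hj⟩ := exists_jump ha hc1 h4 hxi hx.2.2 N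
    obtain ⟨m, rfl⟩ : ∃ m, n = m + N := ⟨n - N, by omega⟩
    refine Set.mem_iUnion.2 ⟨⟨m, fun i => cfA (i + 1) x - 1⟩, hxi, fun i => ?_, hj⟩
    have := one_le_cfA hxi i
    simp only
    omega
  · refine liminf_le_of_le (by isBoundedDefault) fun y hy => ?_
    obtain ⟨N, hN⟩ := hy.exists
    refine hN.trans ?_
    rw [ENNReal.tsum_sigma']
    calc _ ≤ ∑' n : ℕ, Z ^ (n + N) * ENNReal.ofReal (Real.exp (-κ * c ^ (n + N + 1))) := by
          refine ENNReal.tsum_le_tsum fun n => ?_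
          rw [hZdef, ← tsum_pi_prod, ← ENNReal.tsum_mul_right]
          exact ENNReal.tsum_le_tsum fun w =>
            ediam_jumpSet_rpow_le (by linarith) h3 hs0 (n + N) w
      _ ≤ B := ENNReal.tsum_comp_le_tsum_of_injective (add_left_injective N)
          fun n => Z ^ n * ENNReal.ofReal (Real.exp (-κ * c ^ (n + 1)))

theorem dimH_frequently_le {a b : ℝ} (ha : 1 < a) (hb : 1 < b) :
    dimH {x | x ∈ Set.Ico (0 : ℝ) 1 ∧ Irrational x ∧
        ∃ᶠ n : ℕ in atTop, a ^ (b ^ n) ≤ (cfA n x : ℝ)} ≤ ENNReal.ofReal (1 / (1 + b)) := by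
  refine ENNReal.le_of_forall_pos_le_add fun ε hε _ => ?_
  refine (dimH_frequently_le_of_lt ha hb (lt_add_of_pos_right _ (NNReal.coe_pos.2 hε))).trans ?_
  rw [ENNReal.ofReal_add (by positivity) ε.coe_nonneg, ENNReal.ofReal_coe_nnreal]

/-! ### Continued fractions with prescribed digits -/

/-- The finite continued fraction `[d 0, …, d (n - 1)]`. -/
noncomputable def cfTrunc : ℕ → (ℕ → ℕ) → ℝ
  | 0, _ => 0
  | n + 1, d => 1 / (d 0 + cfTrunc n fun k => d (k + 1))

lemma cfTrunc_mem (n : ℕ) (d : ℕ → ℕ) (hd : ∀ k, 2 ≤ d k) :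
    cfTrunc n d ∈ Set.Icc (0 : ℝ) (1 / 2) := by
  induction n generalizing d with
  | zero => simp [cfTrunc]
  | succ n ih =>
    have h := ih (fun k => d (k + 1)) fun k => hd _
    have h0 : (2 : ℝ) ≤ d 0 := by exact_mod_cast hd 0
    rw [cfTrunc]
    refine ⟨one_div_nonneg.2 (by linarith [h.1]), one_div_le_one_div_of_le (by norm_num) ?_⟩
    linarith [h.1]

lemma cfTrunc_dist (n : ℕ) (d : ℕ → ℕ) (hd : ∀ k, 2 ≤ d k) :
    dist (cfTrunc n d) (cfTrunc (n + 1) d) ≤ 1 * (1 / 4) ^ n := by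
  induction n generalizing d with
  | zero =>
    have h := cfTrunc_mem 1 d hd
    change dist 0 (cfTrunc 1 d) ≤ _
    rw [Real.dist_eq, abs_le]
    constructor <;> linarith [h.1, h.2]
  | succ n ih =>
    have h0 : (2 : ℝ) ≤ d 0 := by exact_mod_cast hd 0
    have h := ih (fun k => d (k + 1)) fun k => hd _
    have h1 := cfTrunc_mem n (fun k => d (k + 1)) fun k => hd _
    have h2 := cfTrunc_mem (n + 1) (fun k => d (k + 1)) fun k => hd _
    change dist (1 / ((d 0 : ℝ) + cfTrunc n fun k => d (k + 1)))
      (1 / ((d 0 : ℝ) + cfTrunc (n + 1) fun k => d (k + 1))) ≤ _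
    generalize cfTrunc n (fun k => d (k + 1)) = u at *
    generalize cfTrunc (n + 1) (fun k => d (k + 1)) = v at *
    generalize (d 0 : ℝ) = k at *
    rw [Real.dist_eq] at *
    have pu : 0 < k + u := by linarith [h1.1]
    have pv : 0 < k + v := by linarith [h2.1]
    have e : 1 / (k + u) - 1 / (k + v) = (v - u) / ((k + u) * (k + v)) := by field_simp; ring
    rw [e, abs_div, abs_of_pos (mul_pos pu pv), div_le_iff₀ (mul_pos pu pv), abs_sub_comm]
    have h4 : 4 ≤ (k + u) * (k + v) := by nlinarith [h1.1, h2.1]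
    have h5 : (0 : ℝ) < (1 / 4) ^ n := by positivity
    rw [pow_succ]
    nlinarith

/-- The infinite continued fraction `[d 0, d 1, …]`, meaningful when all digits are at least `2`. -/
noncomputable def cfLim (d : ℕ → ℕ) : ℝ := limUnder atTop fun n => cfTrunc n d

lemma tendsto_cfLim (d : ℕ → ℕ) (hd : ∀ k, 2 ≤ d k) :
    Tendsto (fun n => cfTrunc n d) atTop (𝓝 (cfLim d)) :=
  (cauchySeq_of_le_geometric (1 / 4) 1 (by norm_num) fun n => cfTrunc_dist n d hd).tendsto_limUnder

lemma cfLim_mem_Icc (d : ℕ → ℕ) (hd : ∀ k, 2 ≤ d k) : cfLim d ∈ Set.Icc (0 : ℝ) (1 / 2) :=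
  isClosed_Icc.mem_of_tendsto (tendsto_cfLim d hd) (Eventually.of_forall fun n => cfTrunc_mem n d hd)

lemma cfLim_eq (d : ℕ → ℕ) (hd : ∀ k, 2 ≤ d k) :
    cfLim d = 1 / (d 0 + cfLim fun k => d (k + 1)) := by
  have h1 := (tendsto_cfLim d hd).comp (tendsto_add_atTop_nat 1)
  have hd' : ∀ k, 2 ≤ d (k + 1) := fun k => hd _
  have h2 := tendsto_cfLim (fun k => d (k + 1)) hd'
  have h0 : (2 : ℝ) ≤ d 0 := by exact_mod_cast hd 0
  have h3 := (cfLim_mem_Icc _ hd').1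
  refine tendsto_nhds_unique h1 ?_
  exact Tendsto.div tendsto_const_nhds (tendsto_const_nhds.add h2) (by linarith)

lemma cfLim_pos (d : ℕ → ℕ) (hd : ∀ k, 2 ≤ d k) : 0 < cfLim d := by
  have h0 : (2 : ℝ) ≤ d 0 := by exact_mod_cast hd 0
  have h3 := (cfLim_mem_Icc (fun k => d (k + 1)) fun k => hd _).1
  rw [cfLim_eq d hd]
  exact one_div_pos.2 (by linarith)

/-- Infinite descent: a representation `p / q` of `[d 0, d 1, …]` yields one of `[d 1, d 2, …]` with
denominator `p < q`. -/
lemma cfLim_ne_div (q : ℕ) : ∀ (d : ℕ → ℕ), (∀ k, 2 ≤ d k) → ∀ p : ℤ, cfLim d ≠ p / q := by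
  induction q using Nat.strong_induction_on with
  | _ q ih =>
    intro d hd p h
    have h1 := cfLim_pos d hd
    have h2 := (cfLim_mem_Icc d hd).2
    have hd' : ∀ k, 2 ≤ d (k + 1) := fun k => hd _
    have hq : (0 : ℝ) < q := by
      rcases Nat.eq_zero_or_pos q with rfl | hq
      · rw [h] at h1; simp at h1
      · exact_mod_cast hq
    have hp : (0 : ℝ) < p := by
      rw [h] at h1
      exact (div_pos_iff_of_pos_right hq).1 h1
    have hpq : (p : ℝ) < q := by
      rw [h, div_le_iff₀ hq] at h2
      linarith
    lift p to ℕ using (by exact_mod_cast hp.le)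
    rw [Int.cast_natCast] at *
    refine ih p (by exact_mod_cast hpq) _ hd' (q - d 0 * p) ?_
    have h3 := cfLim_eq d hd
    have h4 := cfLim_pos _ hd'
    have h5 : (0 : ℝ) < d 0 + cfLim fun k => d (k + 1) := by positivity
    rw [h, div_eq_div_iff hq.ne' h5.ne'] at h3
    rw [eq_div_iff hp.ne']
    push_cast
    linarith

lemma cfLim_mem (d : ℕ → ℕ) (hd : ∀ k, 2 ≤ d k) : cfLim d ∈ irrUnit := by
  refine ⟨cfLim_pos d hd, by linarith [(cfLim_mem_Icc d hd).2], ?_⟩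
  rintro ⟨r, hr⟩
  refine cfLim_ne_div r.den d hd r.num ?_
  rw [← hr]
  exact_mod_cast (Rat.num_div_den r).symm

lemma floor_one_div_cfLim (d : ℕ → ℕ) (hd : ∀ k, 2 ≤ d k) : ⌊1 / cfLim d⌋₊ = d 0 := by
  have h := cfLim_mem_Icc (fun k => d (k + 1)) fun k => hd _
  rw [cfLim_eq d hd, one_div_one_div,
    Nat.floor_eq_iff (by linarith [h.1, Nat.cast_nonneg (α := ℝ) (d 0)])]
  constructor <;> linarith [h.1, h.2]

lemma gaussMap_cfLim (d : ℕ → ℕ) (hd : ∀ k, 2 ≤ d k) :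
    gaussMap (cfLim d) = cfLim fun k => d (k + 1) := by
  have h1 := floor_one_div_cfLim d hd
  have h2 := cfLim_pos d hd
  rw [gaussMap, if_neg h2.ne', ← natCast_floor_eq_intCast_floor (one_div_pos.2 h2).le, h1,
    cfLim_eq d hd, one_div_one_div]
  ring

lemma iterate_cfLim (d : ℕ → ℕ) (hd : ∀ k, 2 ≤ d k) (n : ℕ) :
    gaussMap^[n] (cfLim d) = cfLim fun k => d (k + n) := by
  induction n with
  | zero => rfl
  | succ n ih =>
    rw [Function.iterate_succ_apply', ih, gaussMap_cfLim _ fun k => hd _]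
    congr 1; ext k; congr 1; omega

lemma cfA_cfLim (d : ℕ → ℕ) (hd : ∀ k, 2 ≤ d k) (n : ℕ) : cfA (n + 1) (cfLim d) = d n := by
  rw [cfA, Nat.add_sub_cancel, iterate_cfLim d hd, floor_one_div_cfLim _ fun k => hd _, Nat.zero_add]

/-- The counterpart of `cylinder_contract`: digits below `B i` bound the expansion of the iterated
Gauss map from above. -/
lemma cylinder_expand {x y : ℝ} (hx : x ∈ irrUnit) (hy : y ∈ irrUnit) (B : ℕ → ℝ) (n : ℕ)
    (h : ∀ i < n, cfA (i + 1) x = cfA (i + 1) y) (hB : ∀ i, (cfA (i + 1) x : ℝ) + 1 ≤ B i) :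
    |gaussMap^[n] x - gaussMap^[n] y| ≤ |x - y| * (∏ i ∈ Finset.range n, B i) ^ 2 := by
  induction n with
  | zero => simp
  | succ n ih =>
    have ih := ih fun i hi => h i (by omega)
    have vx := iterate_mem hx (n + 1)
    have vy := iterate_mem hy (n + 1)
    have ex := one_div_iterate hx n
    have ey := one_div_iterate hy n
    rw [← h n (by omega)] at ey
    have hk : (1 : ℝ) ≤ cfA (n + 1) x := by exact_mod_cast one_le_cfA hx n
    have hBn := hB n
    rw [Finset.prod_range_succ, mul_pow, ← mul_assoc]
    generalize gaussMap^[n + 1] x = x' at *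
    generalize gaussMap^[n + 1] y = y' at *
    generalize gaussMap^[n] x = u at *
    generalize gaussMap^[n] y = v at *
    generalize (cfA (n + 1) x : ℝ) = k at *
    have hu : u = 1 / (k + x') := by rw [← ex]; simp
    have hv : v = 1 / (k + y') := by rw [← ey]; simp
    have px : 0 < k + x' := by linarith [vx.1]
    have py : 0 < k + y' := by linarith [vy.1]
    have key : |u - v| * ((k + x') * (k + y')) = |x' - y'| := by
      have : u - v = (y' - x') / ((k + x') * (k + y')) := by
        rw [hu, hv]; field_simp; ring
      rw [this, abs_div, abs_of_pos (mul_pos px py), div_mul_cancel₀ _ (mul_pos px py).ne',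
        abs_sub_comm]
    have hk2 : (k + x') * (k + y') ≤ B n ^ 2 := by
      rw [sq]
      exact mul_le_mul (by linarith [vx.2.1]) (by linarith [vy.2.1]) py.le (by linarith)
    calc |x' - y'| = |u - v| * ((k + x') * (k + y')) := key.symm
      _ ≤ |u - v| * B n ^ 2 := by gcongr
      _ ≤ _ := by gcongr

/-- Two points whose digits, all at least `2`, first differ at place `n + 1`, by `Δ`, are at
distance of order at least `Δ / (B 0 ⋯ B n) ^ 2`. -/
lemma separation {x y : ℝ} (hx : x ∈ irrUnit) (hy : y ∈ irrUnit) (B : ℕ → ℝ) (n : ℕ)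
    (h : ∀ i < n, cfA (i + 1) x = cfA (i + 1) y) (hne : cfA (n + 1) x ≠ cfA (n + 1) y)
    (hBx : ∀ i, (cfA (i + 1) x : ℝ) + 1 ≤ B i) (hBy : ∀ i, (cfA (i + 1) y : ℝ) + 1 ≤ B i)
    (h2x : ∀ i, 2 ≤ cfA (i + 1) x) (h2y : ∀ i, 2 ≤ cfA (i + 1) y) :
    |(cfA (n + 1) x : ℝ) - cfA (n + 1) y| ≤
      2 * |x - y| * (∏ i ∈ Finset.range (n + 1), B i) ^ 2 := by
  have h1 := cylinder_expand hx hy B n h hBx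
  have half : ∀ z ∈ irrUnit, (∀ i, 2 ≤ cfA (i + 1) z) → gaussMap^[n + 1] z ≤ 1 / 2 := by
    intro z hz h2
    have e := one_div_iterate hz (n + 1)
    have p := (iterate_mem hz (n + 1)).1
    have p' := (iterate_mem hz (n + 1 + 1)).1
    have : (2 : ℝ) ≤ cfA (n + 1 + 1) z := by exact_mod_cast h2 (n + 1)
    rw [le_div_iff₀ (by norm_num), mul_comm, ← le_div_iff₀ p]
    linarith
  have hx2 := half x hx h2x
  have hy2 := half y hy h2y
  have vx := iterate_mem hx (n + 1)
  have vy := iterate_mem hy (n + 1)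
  have ex := one_div_iterate hx n
  have ey := one_div_iterate hy n
  have hBn := hBx n
  have hBn' := hBy n
  have hk : (2 : ℝ) ≤ cfA (n + 1) x := by exact_mod_cast h2x n
  have hl : (2 : ℝ) ≤ cfA (n + 1) y := by exact_mod_cast h2y n
  have hΔ : (1 : ℝ) ≤ |(cfA (n + 1) x : ℝ) - cfA (n + 1) y| := by
    have : (1 : ℤ) ≤ |(cfA (n + 1) x : ℤ) - cfA (n + 1) y| :=
      Int.one_le_abs (sub_ne_zero.2 (by exact_mod_cast hne))
    exact_mod_cast this
  rw [Finset.prod_range_succ, mul_pow]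
  generalize gaussMap^[n + 1] x = x' at *
  generalize gaussMap^[n + 1] y = y' at *
  generalize gaussMap^[n] x = u at *
  generalize gaussMap^[n] y = v at *
  generalize (cfA (n + 1) x : ℝ) = k at *
  generalize (cfA (n + 1) y : ℝ) = l at *
  have hu : u = 1 / (k + x') := by rw [← ex]; simp
  have hv : v = 1 / (l + y') := by rw [← ey]; simp
  have px : 0 < k + x' := by linarith [vx.1]
  have py : 0 < l + y' := by linarith [vy.1]
  have key : |u - v| * ((k + x') * (l + y')) = |(k - l) + (x' - y')| := by
    have : u - v = -((k - l) + (x' - y')) / ((k + x') * (l + y')) := by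
      rw [hu, hv]; field_simp; ring
    rw [this, abs_div, abs_of_pos (mul_pos px py), div_mul_cancel₀ _ (mul_pos px py).ne', abs_neg]
  have hk2 : (k + x') * (l + y') ≤ B n ^ 2 := by
    rw [sq]
    exact mul_le_mul (by linarith [vx.2.1]) (by linarith [vy.2.1]) py.le (by linarith)
  have h3 : |x' - y'| ≤ 1 / 2 := by
    rw [abs_le]; constructor <;> linarith [vx.1, vy.1]
  have h4 : |k - l| ≤ |(k - l) + (x' - y')| + |x' - y'| := by
    have := abs_sub ((k - l) + (x' - y')) (x' - y')
    simpa using this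
  calc |k - l| ≤ 2 * |(k - l) + (x' - y')| := by linarith
    _ = 2 * (|u - v| * ((k + x') * (l + y'))) := by rw [key]
    _ ≤ 2 * ((|x - y| * (∏ i ∈ Finset.range n, B i) ^ 2) * B n ^ 2) := by gcongr
    _ = _ := by ring

/-! ### Mixed radix expansions -/

/-- The remainders of the expansion of `t` in the mixed radix `A 0, A 1, …`. -/
noncomputable def radixRem (A : ℕ → ℕ) (t : ℝ) : ℕ → ℝ
  | 0 => t
  | n + 1 => Int.fract (A n * radixRem A t n)

/-- The digits of the expansion `t = ∑ n, radixDig A t n / (A 0 ⋯ A n)`. -/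
noncomputable def radixDig (A : ℕ → ℕ) (t : ℝ) (n : ℕ) : ℕ := ⌊A n * radixRem A t n⌋₊

lemma radixRem_mem (A : ℕ → ℕ) {t : ℝ} (ht : t ∈ Set.Ico (0 : ℝ) 1) (n : ℕ) :
    radixRem A t n ∈ Set.Ico (0 : ℝ) 1 := by
  cases n with
  | zero => exact ht
  | succ n => exact ⟨Int.fract_nonneg _, Int.fract_lt_one _⟩

lemma radix_step (A : ℕ → ℕ) {t : ℝ} (ht : t ∈ Set.Ico (0 : ℝ) 1) (n : ℕ) :
    A n * radixRem A t n = radixDig A t n + radixRem A t (n + 1) := by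
  have h := (radixRem_mem A ht n).1
  rw [radixDig, radixRem, natCast_floor_eq_intCast_floor (by positivity), Int.floor_add_fract]

lemma radixDig_lt (A : ℕ → ℕ) {t : ℝ} (ht : t ∈ Set.Ico (0 : ℝ) 1) (n : ℕ) (hA : 0 < A n) :
    radixDig A t n < A n := by
  have h := radixRem_mem A ht n
  have hA' : (0 : ℝ) < A n := by exact_mod_cast hA
  rw [radixDig, Nat.floor_lt (mul_nonneg hA'.le h.1)]
  nlinarith [h.2]

lemma radix_dist (A : ℕ → ℕ) {t u : ℝ} (ht : t ∈ Set.Ico (0 : ℝ) 1) (hu : u ∈ Set.Ico (0 : ℝ) 1)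
    (n : ℕ) (h : ∀ i < n, radixDig A t i = radixDig A u i) :
    |t - u| * ∏ i ∈ Finset.range n, (A i : ℝ) = |radixRem A t n - radixRem A u n| := by
  induction n with
  | zero => simp [radixRem]
  | succ n ih =>
    have e1 := radix_step A ht n
    have e2 := radix_step A hu n
    rw [← h n (by omega)] at e2
    rw [Finset.prod_range_succ, ← mul_assoc, ih fun i hi => h i (by omega),
      ← Nat.abs_cast (A n), ← abs_mul]
    congr 1
    linarith

lemma radix_dist_le_one (A : ℕ → ℕ) {t u : ℝ} (ht : t ∈ Set.Ico (0 : ℝ) 1)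
    (hu : u ∈ Set.Ico (0 : ℝ) 1) (n : ℕ) (h : ∀ i < n, radixDig A t i = radixDig A u i) :
    |t - u| * ∏ i ∈ Finset.range n, (A i : ℝ) ≤ 1 := by
  rw [radix_dist A ht hu n h, abs_le]
  have h1 := radixRem_mem A ht n
  have h2 := radixRem_mem A hu n
  constructor <;> linarith [h1.1, h1.2, h2.1, h2.2]

lemma radix_dist_le_diff (A : ℕ → ℕ) {t u : ℝ} (ht : t ∈ Set.Ico (0 : ℝ) 1)
    (hu : u ∈ Set.Ico (0 : ℝ) 1) (n : ℕ) (h : ∀ i < n, radixDig A t i = radixDig A u i)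
    (hne : radixDig A t n ≠ radixDig A u n) :
    |t - u| * ∏ i ∈ Finset.range (n + 1), (A i : ℝ) ≤
      2 * |(radixDig A t n : ℝ) - radixDig A u n| := by
  have e1 := radix_step A ht n
  have e2 := radix_step A hu n
  have h1 := radixRem_mem A ht (n + 1)
  have h2 := radixRem_mem A hu (n + 1)
  have hΔ : (1 : ℝ) ≤ |(radixDig A t n : ℝ) - radixDig A u n| := by
    have : (1 : ℤ) ≤ |(radixDig A t n : ℤ) - radixDig A u n| :=
      Int.one_le_abs (sub_ne_zero.2 (by exact_mod_cast hne))
    exact_mod_cast this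
  have h3 : |radixRem A t (n + 1) - radixRem A u (n + 1)| ≤ 1 := by
    rw [abs_le]; constructor <;> linarith [h1.1, h1.2, h2.1, h2.2]
  rw [Finset.prod_range_succ, ← mul_assoc, radix_dist A ht hu n h, ← Nat.abs_cast (A n), ← abs_mul,
    show (radixRem A t n - radixRem A u n) * (A n : ℝ) = ((radixDig A t n : ℝ) - radixDig A u n) +
      (radixRem A t (n + 1) - radixRem A u (n + 1)) by linarith]
  exact (abs_add_le _ _).trans (by linarith)

/-! ### The lower bound -/

/-- The base `⌈a ^ (b ^ (n + 1))⌉`; the `(n + 1)`-st partial quotient of the points of the Cantor set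
below runs through the `lucBase a b n` integers from `lucBase a b n` on. -/
noncomputable def lucBase (a b : ℝ) (n : ℕ) : ℕ := ⌈a ^ (b ^ (n + 1))⌉₊

lemma two_le_lucBase {a b : ℝ} (ha : 1 < a) (hb : 1 < b) (n : ℕ) : 2 ≤ lucBase a b n := by
  have h : 1 < a ^ (b ^ (n + 1)) := Real.one_lt_rpow ha (by positivity)
  exact Nat.lt_ceil.2 (by simpa using h)

lemma log_prod_lucBase {a b : ℝ} (ha : 1 < a) (hb : 1 < b) (n : ℕ) :
    Real.log a * ∑ i ∈ Finset.range n, b ^ (i + 1) ≤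
        Real.log (∏ i ∈ Finset.range n, (lucBase a b i : ℝ)) ∧
      Real.log (∏ i ∈ Finset.range n, (lucBase a b i : ℝ)) ≤
        n * Real.log 2 + Real.log a * ∑ i ∈ Finset.range n, b ^ (i + 1) := by
  have hpos : ∀ i, (0 : ℝ) < lucBase a b i := fun i => by
    have := two_le_lucBase ha hb i
    exact_mod_cast (by omega : 0 < lucBase a b i)
  rw [Real.log_prod fun i _ => (hpos i).ne', Finset.mul_sum]
  have hone : ∀ i, 1 < a ^ (b ^ (i + 1)) := fun i => Real.one_lt_rpow ha (by positivity)
  have hlog : ∀ i : ℕ, Real.log (a ^ (b ^ (i + 1))) = Real.log a * b ^ (i + 1) := fun i => by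
    rw [Real.log_rpow (by linarith), mul_comm]
  constructor
  · refine Finset.sum_le_sum fun i _ => ?_
    rw [← hlog]
    exact Real.log_le_log (by linarith [hone i]) (Nat.le_ceil _)
  · have : ∀ i ∈ Finset.range n,
        Real.log (lucBase a b i) ≤ Real.log 2 + Real.log a * b ^ (i + 1) := fun i _ => by
      rw [← hlog, ← Real.log_mul (by norm_num) (by linarith [hone i])]
      refine Real.log_le_log (hpos i) ?_
      have := Nat.ceil_lt_add_one (a := a ^ (b ^ (i + 1))) (by linarith [hone i])
      have h1 := hone i
      rw [lucBase]
      linarith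
    refine (Finset.sum_le_sum this).trans (le_of_eq ?_)
    rw [Finset.sum_add_distrib]
    simp

/-- The products of the bases satisfy, up to lower order terms, `Q (n + 1) = Q n ^ b`, and
`b * s < 1 - s`. -/
lemma lucBase_growth {a b s : ℝ} (ha : 1 < a) (hb : 1 < b) (hs0 : 0 < s) (hs : s * (1 + b) < 1) :
    ∃ C : ℝ, 0 < C ∧ ∀ n : ℕ,
      (4 ^ (n + 2) * ∏ i ∈ Finset.range (n + 1), (lucBase a b i : ℝ)) ^ s ≤
        C * (∏ i ∈ Finset.range n, (lucBase a b i : ℝ)) ^ (1 - s) := by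
  have hl : 0 < Real.log a := Real.log_pos ha
  have hκ : 0 < 1 - s * (1 + b) := by linarith
  have hpos : ∀ n, (0 : ℝ) < ∏ i ∈ Finset.range n, (lucBase a b i : ℝ) := fun n =>
    Finset.prod_pos fun i _ => by
      have := two_le_lucBase ha hb i
      exact_mod_cast (by omega : 0 < lucBase a b i)
  obtain ⟨C, hC⟩ := exists_linear_le_pow (s * (3 * Real.log 2)) ((1 - s * (1 + b)) * Real.log a) b
    (by positivity) hb
  set D : ℝ := C + (1 - s * (1 + b)) * Real.log a + s * (5 * Real.log 2 + Real.log a * b) with hD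
  refine ⟨Real.exp D, Real.exp_pos _, fun n => ?_⟩
  have h1 := (log_prod_lucBase ha hb n).1
  have h2 := (log_prod_lucBase ha hb (n + 1)).2
  have hσ : b ^ n - 1 ≤ ∑ i ∈ Finset.range n, b ^ (i + 1) := by
    induction n with
    | zero => simp
    | succ n ih =>
      have := ih (log_prod_lucBase ha hb n).1 (log_prod_lucBase ha hb (n + 1)).2
      rw [Finset.sum_range_succ]
      linarith [one_le_pow₀ hb.le (n := n)]
  have hσ' : ∑ i ∈ Finset.range (n + 1), b ^ (i + 1) =
      b * ∑ i ∈ Finset.range n, b ^ (i + 1) + b := by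
    rw [Finset.sum_range_succ', Finset.mul_sum]
    congr 1
    · exact Finset.sum_congr rfl fun i _ => by ring
    · simp
  have h3 := hpos n
  have h4 := hpos (n + 1)
  rw [← Real.exp_log h3, ← Real.exp_mul, ← Real.exp_add, Real.rpow_def_of_pos (by positivity),
    Real.exp_le_exp, Real.log_mul (by positivity) h4.ne', Real.log_pow,
    show (4 : ℝ) = 2 ^ 2 by norm_num, Real.log_pow]
  rw [hσ'] at h2
  have h5 := hC n
  push_cast at h2 ⊢
  generalize (∑ i ∈ Finset.range n, b ^ (i + 1)) = σ at *
  generalize Real.log (∏ i ∈ Finset.range n, (lucBase a b i : ℝ)) = q at *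
  generalize Real.log (∏ i ∈ Finset.range (n + 1), (lucBase a b i : ℝ)) = q' at *
  have hs1 : 0 < 1 - s := by nlinarith
  have h6 : (1 - s) * (Real.log a * σ) ≤ (1 - s) * q := by gcongr
  have h7 : s * q' ≤ s * ((n + 1) * Real.log 2 + Real.log a * (b * σ + b)) := by gcongr
  have h8 : (1 - s * (1 + b)) * Real.log a * (b ^ n - 1) ≤ (1 - s * (1 + b)) * Real.log a * σ := by
    gcongr
  rw [hD]
  linarith

/-- The point whose `(n + 1)`-st partial quotient is `lucBase a b n` plus the `n`-th digit of `t` in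
the mixed radix given by `lucBase a b`. -/
noncomputable def lucPoint (a b t : ℝ) : ℝ :=
  cfLim fun n => lucBase a b n + radixDig (lucBase a b) t n

lemma cfA_lucPoint {a b : ℝ} (ha : 1 < a) (hb : 1 < b) (t : ℝ) (n : ℕ) :
    cfA (n + 1) (lucPoint a b t) = lucBase a b n + radixDig (lucBase a b) t n :=
  cfA_cfLim _ (fun k => (two_le_lucBase ha hb k).trans (Nat.le_add_right _ _)) n

lemma lucPoint_mem {a b : ℝ} (ha : 1 < a) (hb : 1 < b) (t : ℝ) : lucPoint a b t ∈ irrUnit :=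
  cfLim_mem _ fun k => (two_le_lucBase ha hb k).trans (Nat.le_add_right _ _)

/-- The inverse of `lucPoint` is Hölder continuous with every exponent `s < 1 / (1 + b)`. -/
lemma lucPoint_holder {a b s : ℝ} (ha : 1 < a) (hb : 1 < b) (hs0 : 0 < s) (hs : s * (1 + b) < 1) :
    ∃ C : ℝ, 0 < C ∧ ∀ t ∈ Set.Ico (0 : ℝ) 1, ∀ u ∈ Set.Ico (0 : ℝ) 1,
      |t - u| ≤ C * |lucPoint a b t - lucPoint a b u| ^ s := by
  obtain ⟨C, hC0, hC⟩ := lucBase_growth ha hb hs0 hs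
  refine ⟨C, hC0, fun t ht u hu => ?_⟩
  have hs1 : 0 < 1 - s := by nlinarith
  set A := lucBase a b with hA
  have hA2 : ∀ n, 2 ≤ A n := two_le_lucBase ha hb
  have hpos : ∀ n, (0 : ℝ) < ∏ i ∈ Finset.range n, (A i : ℝ) := fun n =>
    Finset.prod_pos fun i _ => by
      have := hA2 i
      exact_mod_cast (by omega : 0 < A i)
  by_cases hall : ∀ n, radixDig A t n = radixDig A u n
  · -- All digits agree, so `|t - u| * 2 ^ n ≤ 1` for every `n`.
    have h0 : |t - u| = 0 := by
      by_contra hne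
      have hp : 0 < |t - u| := lt_of_le_of_ne (abs_nonneg _) (Ne.symm hne)
      obtain ⟨n, hn⟩ := pow_unbounded_of_one_lt (1 / |t - u|) (one_lt_two (α := ℝ))
      have h1 := radix_dist_le_one A ht hu n fun i _ => hall i
      have h2 : (2 : ℝ) ^ n ≤ ∏ i ∈ Finset.range n, (A i : ℝ) := by
        calc (2 : ℝ) ^ n = ∏ i ∈ Finset.range n, (2 : ℝ) := by simp
          _ ≤ _ := Finset.prod_le_prod (fun _ _ => by norm_num) fun i _ => by exact_mod_cast hA2 i
      rw [div_lt_iff₀ hp] at hn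
      nlinarith
    rw [h0]; positivity
  · push Not at hall
    classical
    obtain ⟨n, hne, hlt⟩ : ∃ n, radixDig A t n ≠ radixDig A u n ∧
        ∀ i < n, radixDig A t i = radixDig A u i :=
      ⟨Nat.find hall, Nat.find_spec hall, fun i hi => not_not.1 (Nat.find_min hall hi)⟩
    have hd : ∀ v ∈ Set.Ico (0 : ℝ) 1, ∀ i,
        (cfA (i + 1) (lucPoint a b v) : ℝ) + 1 ≤ 2 * (A i : ℝ) := by
      intro v hv i
      rw [cfA_lucPoint ha hb]
      have h1 := radixDig_lt A hv i (by have := hA2 i; omega)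
      exact_mod_cast (by omega : A i + radixDig A v i + 1 ≤ 2 * A i)
    have hd2 : ∀ v i, 2 ≤ cfA (i + 1) (lucPoint a b v) := by
      intro v i
      rw [cfA_lucPoint ha hb]
      exact (hA2 i).trans (Nat.le_add_right _ _)
    have h1 := radix_dist_le_one A ht hu n hlt
    have h2 := radix_dist_le_diff A ht hu n hlt hne
    have h3 := separation (lucPoint_mem ha hb t) (lucPoint_mem ha hb u) (fun i => 2 * (A i : ℝ)) n
      (fun i hi => by rw [cfA_lucPoint ha hb, cfA_lucPoint ha hb]; exact congrArg _ (hlt i hi))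
      (by rw [cfA_lucPoint ha hb, cfA_lucPoint ha hb]; exact fun h => hne (Nat.add_left_cancel h))
      (hd t ht) (hd u hu) (hd2 t) (hd2 u)
    rw [cfA_lucPoint ha hb, cfA_lucPoint ha hb, Finset.prod_mul_distrib, Finset.prod_const,
      Finset.card_range, ← hA] at h3
    push_cast at h3
    rw [add_sub_add_left_eq_sub] at h3
    have h4 := hC n
    have hQ := hpos n
    have hQ' := hpos (n + 1)
    generalize (∏ i ∈ Finset.range n, (A i : ℝ)) = Q at *
    generalize (∏ i ∈ Finset.range (n + 1), (A i : ℝ)) = Q' at *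
    generalize |(radixDig A t n : ℝ) - radixDig A u n| = Δ at *
    have hδ : 0 ≤ |t - u| := abs_nonneg _
    have hρ : 0 ≤ |lucPoint a b t - lucPoint a b u| := abs_nonneg _
    generalize |lucPoint a b t - lucPoint a b u| = ρ at *
    generalize |t - u| = δ at *
    have h5 : δ ≤ ρ * (4 ^ (n + 2) * Q') := by
      have : δ * Q' ≤ ρ * (4 ^ (n + 2) * Q') * Q' := by
        have e : (2 * ρ * (2 ^ (n + 1) * Q') ^ 2) * 2 = ρ * (4 ^ (n + 2) * Q') * Q' := by
          rw [show (4 : ℝ) ^ (n + 2) = (2 ^ (n + 1)) ^ 2 * 4 by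
            rw [← pow_mul, mul_comm (n + 1), pow_mul]; norm_num; ring]
          ring
        linarith
      exact le_of_mul_le_mul_right this hQ'
    have h6 : δ ^ (1 - s) * Q ^ (1 - s) ≤ 1 := by
      rw [← Real.mul_rpow hδ hQ.le]
      exact Real.rpow_le_one (by positivity) h1 hs1.le
    calc δ = δ ^ (1 - s) * δ ^ s := by
          rw [← Real.rpow_add' hδ (by simp)]; simp
      _ ≤ δ ^ (1 - s) * (ρ * (4 ^ (n + 2) * Q')) ^ s := by gcongr
      _ = δ ^ (1 - s) * (ρ ^ s * (4 ^ (n + 2) * Q') ^ s) := by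
          rw [Real.mul_rpow hρ (by positivity)]
      _ ≤ δ ^ (1 - s) * (ρ ^ s * (C * Q ^ (1 - s))) := by gcongr
      _ = C * ρ ^ s * (δ ^ (1 - s) * Q ^ (1 - s)) := by ring
      _ ≤ C * ρ ^ s * 1 := by gcongr
      _ = _ := mul_one _

theorem le_dimH_eventually {a b : ℝ} (ha : 1 < a) (hb : 1 < b) :
    ENNReal.ofReal (1 / (1 + b)) ≤ dimH {x | x ∈ Set.Ico (0 : ℝ) 1 ∧ Irrational x ∧
        ∀ᶠ n : ℕ in atTop, a ^ (b ^ n) ≤ (cfA n x : ℝ)} := by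
  have hsub : lucPoint a b '' Set.Ico (0 : ℝ) 1 ⊆ {x | x ∈ Set.Ico (0 : ℝ) 1 ∧ Irrational x ∧
        ∀ᶠ n : ℕ in atTop, a ^ (b ^ n) ≤ (cfA n x : ℝ)} := by
    rintro _ ⟨t, -, rfl⟩
    have hm := lucPoint_mem ha hb t
    refine ⟨⟨hm.1.le, hm.2.1⟩, hm.2.2, ?_⟩
    filter_upwards [eventually_ge_atTop 1] with n hn
    obtain ⟨m, rfl⟩ : ∃ m, n = m + 1 := ⟨n - 1, by omega⟩
    rw [cfA_lucPoint ha hb]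
    refine (Nat.le_ceil _).trans ?_
    exact_mod_cast Nat.le_add_right _ _
  refine le_trans ?_ (dimH_mono hsub)
  refine ENNReal.le_of_forall_nnreal_lt fun s hs => ?_
  rcases eq_or_lt_of_le (zero_le (a := s)) with rfl | hs0
  · simp
  have hs' : (s : ℝ) * (1 + b) < 1 := by
    rw [← ENNReal.ofReal_coe_nnreal, ENNReal.ofReal_lt_ofReal_iff (by positivity),
      lt_div_iff₀ (by linarith)] at hs
    exact hs
  obtain ⟨C, hC0, hC⟩ := lucPoint_holder ha hb (NNReal.coe_pos.2 hs0) hs'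
  have hinj : Set.InjOn (lucPoint a b) (Set.Ico (0 : ℝ) 1) := by
    intro t ht u hu h
    have := hC t ht u hu
    rw [h, sub_self, abs_zero, Real.zero_rpow (NNReal.coe_pos.2 hs0).ne', mul_zero] at this
    exact sub_eq_zero.1 (abs_nonpos_iff.1 this)
  set f := Function.invFunOn (lucPoint a b) (Set.Ico (0 : ℝ) 1) with hf
  have hleft : ∀ t ∈ Set.Ico (0 : ℝ) 1, f (lucPoint a b t) = t := fun t ht =>
    hinj.leftInvOn_invFunOn ht
  have hhol : HolderOnWith C.toNNReal s f (lucPoint a b '' Set.Ico (0 : ℝ) 1) := by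
    rintro _ ⟨t, ht, rfl⟩ _ ⟨u, hu, rfl⟩
    rw [hleft t ht, hleft u hu, edist_dist, edist_dist, Real.dist_eq, Real.dist_eq,
      ENNReal.ofReal_rpow_of_nonneg (abs_nonneg _) s.coe_nonneg]
    change _ ≤ ENNReal.ofReal C * _
    rw [← ENNReal.ofReal_mul hC0.le]
    exact ENNReal.ofReal_le_ofReal (hC t ht u hu)
  have himg : f '' (lucPoint a b '' Set.Ico (0 : ℝ) 1) = Set.Ico (0 : ℝ) 1 := by
    rw [Set.image_image]
    exact (Set.image_congr hleft).trans (by simp)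
  have h1 := hhol.dimH_image_le hs0
  rw [himg, Real.dimH_of_nonempty_interior (by simp), Module.finrank_self, Nat.cast_one,
    ENNReal.le_div_iff_mul_le (Or.inl (by exact_mod_cast hs0.ne')) (Or.inl ENNReal.coe_ne_top),
    one_mul] at h1
  exact h1

theorem luczak (a b : ℝ) (ha : 1 < a) (hb : 1 < b) :
    dimH {x | x ∈ Set.Ico (0 : ℝ) 1 ∧ Irrational x ∧
        ∃ᶠ n : ℕ in atTop, a ^ (b ^ n) ≤ (cfA n x : ℝ)} =
      ENNReal.ofReal (1 / (1 + b)) ∧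
    dimH {x | x ∈ Set.Ico (0 : ℝ) 1 ∧ Irrational x ∧
        ∀ᶠ n : ℕ in atTop, a ^ (b ^ n) ≤ (cfA n x : ℝ)} =
      ENNReal.ofReal (1 / (1 + b)) := by
  have hsub : {x | x ∈ Set.Ico (0 : ℝ) 1 ∧ Irrational x ∧
        ∀ᶠ n : ℕ in atTop, a ^ (b ^ n) ≤ (cfA n x : ℝ)} ⊆
      {x | x ∈ Set.Ico (0 : ℝ) 1 ∧ Irrational x ∧
        ∃ᶠ n : ℕ in atTop, a ^ (b ^ n) ≤ (cfA n x : ℝ)} :=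
    fun x hx => ⟨hx.1, hx.2.1, hx.2.2.frequently⟩
  exact ⟨le_antisymm (dimH_frequently_le ha hb) ((le_dimH_eventually ha hb).trans (dimH_mono hsub)),
    le_antisymm ((dimH_mono hsub).trans (dimH_frequently_le ha hb)) (le_dimH_eventually ha hb)⟩
end

section
/- Let x ∈ (0,1) be irrational and n ≥ 1. Then the n-th iterate T^n of the Gauss map is differentiable at x with derivative (T^n)'(x) = (−1)^n / ( x·q_{n−1}(x) − p_{n−1}(x) )². -/
/-!
At an irrational point the floor in `T y = 1 / y - ⌊1 / y⌋` is locally constant, so `T` has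
derivative `-1 / y ^ 2` there (`hasDerivAt_gaussMap`); since `T` preserves the irrationals, the
chain rule applies along the whole orbit of `x`.

It remains to identify the product of the factors `(T^k x) ^ 2`. Put `D_n = x q_n - p_n`. The
recurrences of `p` and `q` together with `1 / T^n x = a_{n+1} + T^{n+1} x` give
`D_{n+1} = - (T^{n+1} x) D_n` (`cfD_succ`), with `D_0 = x`. Hence multiplying the derivative
`(-1) ^ n / D_{n-1} ^ 2` of `T^n` by `T'(T^n x) = -1 / (T^n x) ^ 2` yields
`(-1) ^ (n+1) / D_n ^ 2`, which is the induction step.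
-/

open Filter Topology MeasureTheory
open scoped ENNReal NNReal

theorem irrational_gaussMap {x : ℝ} (hx : Irrational x) : Irrational (gaussMap x) := by
  rw [gaussMap, if_neg hx.ne_zero, one_div]
  exact hx.inv.sub_intCast _

theorem gaussMap_nonneg (x : ℝ) : 0 ≤ gaussMap x := by
  rw [gaussMap]
  split_ifs
  · exact le_rfl
  · exact sub_nonneg.2 (Int.floor_le _)

theorem irrational_iterate {x : ℝ} (hx : Irrational x) (n : ℕ) :
    Irrational (gaussMap^[n] x) := by
  induction n with
  | zero => exact hx
  | succ n ih =>
    rw [Function.iterate_succ_apply']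
    exact irrational_gaussMap ih

theorem iterate_nonneg {x : ℝ} (hx : 0 ≤ x) (n : ℕ) : 0 ≤ gaussMap^[n] x := by
  cases n with
  | zero => exact hx
  | succ n =>
    rw [Function.iterate_succ_apply']
    exact gaussMap_nonneg _

theorem hasDerivAt_gaussMap {x : ℝ} (hx : Irrational x) :
    HasDerivAt gaussMap (-1 / x ^ 2) x := by
  have h0 : x ≠ 0 := hx.ne_zero
  have hinv : HasDerivAt (fun y : ℝ => 1 / y - (⌊1 / x⌋ : ℝ)) (-1 / x ^ 2) x := by
    have h := (hasDerivAt_inv h0).sub_const (⌊1 / x⌋ : ℝ)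
    simpa [one_div, neg_div] using h
  refine hinv.congr_of_eventuallyEq ?_
  -- `1 / x` is not an integer, so `1 / y` stays strictly between the same two integers near `x`.
  have hlt : (⌊1 / x⌋ : ℝ) < 1 / x := by
    refine lt_of_le_of_ne (Int.floor_le _) ?_
    rw [one_div]
    exact (hx.inv.ne_int _).symm
  have hcont : ContinuousAt (fun y : ℝ => 1 / y) x := by
    simpa only [one_div] using continuousAt_inv₀ h0
  have hIoo := hcont.eventually (Ioo_mem_nhds hlt (Int.lt_floor_add_one (1 / x)))
  filter_upwards [hIoo, isOpen_ne.mem_nhds h0] with y hy hy0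
  have hfl : ⌊1 / y⌋ = ⌊1 / x⌋ := Int.floor_eq_iff.2 ⟨hy.1.le, hy.2⟩
  rw [gaussMap, if_neg hy0, hfl]

/-- The state `(u_{n-1}, u_n)` of the recurrence `u_k = a_k(x) u_{k-1} + u_{k-2}` started at
`(u_{-1}, u_0) = s`; the starts `(0, 1)` and `(1, 0)` produce `q` and `p` respectively. -/
noncomputable def cfState (x : ℝ) (s : ℕ × ℕ) (n : ℕ) : ℕ × ℕ :=
  (List.ofFn fun i : Fin n => cfA (i + 1) x).foldl (fun p a => (p.2, a * p.2 + p.1)) s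

theorem cfState_zero (x : ℝ) (s : ℕ × ℕ) : cfState x s 0 = s := by
  simp [cfState]

theorem cfState_succ (x : ℝ) (s : ℕ × ℕ) (n : ℕ) :
    cfState x s (n + 1) =
      ((cfState x s n).2, cfA (n + 1) x * (cfState x s n).2 + (cfState x s n).1) := by
  simp only [cfState, List.ofFn_succ_last, List.foldl_append, List.foldl_cons, List.foldl_nil,
    Fin.val_castSucc, Fin.val_last]

/-- The relation `x q_n - p_n = - (T^n x) (x q_{n-1} - p_{n-1})`, valid for all `n ≥ 0` because
the states also record `q_{-1} = 0` and `p_{-1} = 1`. -/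
theorem cfState_relation {x : ℝ} (hx0 : 0 ≤ x) (hx : Irrational x) (n : ℕ) :
    x * ((cfState x (0, 1) n).2 : ℝ) - ((cfState x (1, 0) n).2 : ℝ) =
      -gaussMap^[n] x * (x * ((cfState x (0, 1) n).1 : ℝ) - ((cfState x (1, 0) n).1 : ℝ)) := by
  induction n with
  | zero => simp [cfState_zero]
  | succ n ih =>
    have ht : gaussMap^[n] x ≠ 0 := (irrational_iterate hx n).ne_zero
    have ha : (cfA (n + 1) x : ℝ) = 1 / gaussMap^[n] x - gaussMap^[n + 1] x := by
      rw [Function.iterate_succ_apply', gaussMap, if_neg ht, cfA, Nat.add_sub_cancel,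
        natCast_floor_eq_intCast_floor (one_div_nonneg.2 (iterate_nonneg hx0 n))]
      ring
    rw [cfState_succ, cfState_succ]
    push_cast
    rw [ha]
    generalize gaussMap^[n] x = t at *
    field_simp
    linear_combination ih

theorem cfD_succ {x : ℝ} (hx0 : 0 ≤ x) (hx : Irrational x) (n : ℕ) :
    x * (cfQ x (n + 1) : ℝ) - (cfP x (n + 1) : ℝ) =
      -gaussMap^[n + 1] x * (x * (cfQ x n : ℝ) - (cfP x n : ℝ)) := by
  have h := cfState_relation hx0 hx (n + 1)
  have hq : (cfState x (0, 1) (n + 1)).1 = (cfState x (0, 1) n).2 := by rw [cfState_succ]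
  have hp : (cfState x (1, 0) (n + 1)).1 = (cfState x (1, 0) n).2 := by rw [cfState_succ]
  rw [hq, hp] at h
  exact h

theorem gauss_iterate_deriv (x : ℝ) (hx : x ∈ Set.Ioo (0 : ℝ) 1) (hirr : Irrational x)
    (n : ℕ) (hn : 1 ≤ n) :
    HasDerivAt (fun y => gaussMap^[n] y)
      ((-1 : ℝ) ^ n / (x * (cfQ x (n - 1) : ℝ) - (cfP x (n - 1) : ℝ)) ^ 2) x := by
  induction n, hn using Nat.le_induction with
  | base => simpa [cfQ, cfP, contQ, contP] using hasDerivAt_gaussMap hirr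
  | succ n hn ih =>
    obtain ⟨m, rfl⟩ := Nat.exists_eq_add_of_le' hn
    have h := (hasDerivAt_gaussMap (irrational_iterate hirr (m + 1))).comp x ih
    simp only [Nat.add_sub_cancel] at h ⊢
    rw [cfD_succ hx.1.le hirr m]
    have hfun : (fun y => gaussMap^[m + 1 + 1] y) = gaussMap ∘ fun y => gaussMap^[m + 1] y := by
      funext y
      exact Function.iterate_succ_apply' _ _ _
    rw [div_mul_div_comm, ← pow_succ' (-1 : ℝ)] at h
    rw [hfun, mul_pow, neg_sq]
    exact h
end
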